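/- arXiv:2205.02342 — 4 statements merged into one kernel-verified Lean document; each statement's English description precedes it below -/
import Mathlib

section
/- For all B ∈ M_m(ℂ), 0 < s < 1 and 0 < r ≤ 1, the map A ↦ tr[(B* A^s B)^{r/s}] is concave on the positive semidefinite matrices M_m^+(ℂ). -/
open Matrix
open scoped ComplexOrder

/-- Real power of a matrix, defined spectrally for Hermitian matrices (junk value `0` otherwise). -/
noncomputable def mpow {k : ℕ} (A : Matrix (Fin k) (Fin k) ℂ) (p : ℝ) : Matrix (Fin k) (Fin k) ℂ :=
  if hA : A.IsHermitian then
    (hA.eigenvectorUnitary : Matrix (Fin k) (Fin k) ℂ) *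
      Matrix.diagonal (fun i => ((hA.eigenvalues i ^ p : ℝ) : ℂ)) *
      (hA.eigenvectorUnitary : Matrix (Fin k) (Fin k) ℂ)ᴴ
  else 0

/-- A Schwarz map: `Φ(K*K) ≥ Φ(K)*Φ(K)` for all `K`. -/
def IsSchwarz {a b : ℕ} (Φ : Matrix (Fin a) (Fin a) ℂ →ₗ[ℂ] Matrix (Fin b) (Fin b) ℂ) : Prop :=
  ∀ K, (Φ (Kᴴ * K) - (Φ K)ᴴ * Φ K).PosSemidef

/-- A positive map: sends positive semidefinite matrices to positive semidefinite matrices. -/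
def IsPositiveMap {a b : ℕ} (Φ : Matrix (Fin a) (Fin a) ℂ →ₗ[ℂ] Matrix (Fin b) (Fin b) ℂ) : Prop :=
  ∀ X, X.PosSemidef → (Φ X).PosSemidef

/-- `Ψ` is the Hilbert–Schmidt adjoint of `Φ`: `⟨X, Φ Y⟩ = ⟨Ψ X, Y⟩`. -/
def IsHSAdjoint {a b : ℕ} (Φ : Matrix (Fin a) (Fin a) ℂ →ₗ[ℂ] Matrix (Fin b) (Fin b) ℂ)
    (Ψ : Matrix (Fin b) (Fin b) ℂ →ₗ[ℂ] Matrix (Fin a) (Fin a) ℂ) : Prop :=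
  ∀ X Y, (Xᴴ * Φ Y).trace = ((Ψ X)ᴴ * Y).trace

/-- `U diag(a) U*`. -/
noncomputable def md {m : ℕ} (U : Matrix (Fin m) (Fin m) ℂ) (a : Fin m → ℝ) :
    Matrix (Fin m) (Fin m) ℂ :=
  U * Matrix.diagonal (fun i => (a i : ℂ)) * Uᴴ

lemma tr0 {m : ℕ} (M : Matrix (Fin m) (Fin m) ℂ) (a w : Fin m → ℝ) :
    (Mᴴ * Matrix.diagonal (fun i => (a i : ℂ)) * M *
      Matrix.diagonal (fun i => (w i : ℂ))).trace.re
      = ∑ i, ∑ j, a i * w j * ‖M i j‖ ^ 2 := by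
  rw [Finset.sum_comm]
  simp only [Matrix.trace, Matrix.diag, Matrix.mul_diagonal, Complex.re_sum]
  refine Finset.sum_congr rfl fun j _ => ?_
  rw [Matrix.mul_apply, Finset.sum_mul, Complex.re_sum]
  refine Finset.sum_congr rfl fun i _ => ?_
  rw [Matrix.mul_diagonal, Matrix.conjTranspose_apply, ← Complex.normSq_eq_norm_sq]
  simp [Complex.normSq_apply]
  ring

lemma tr1 {m : ℕ} (K U V : Matrix (Fin m) (Fin m) ℂ) (a w : Fin m → ℝ) :
    (Kᴴ * md U a * K * md V w).trace.re
      = ∑ i, ∑ j, a i * w j * ‖(Uᴴ * K * V) i j‖ ^ 2 := by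
  rw [← tr0]
  congr 1
  simp only [md, ← Matrix.mul_assoc]
  rw [Matrix.trace_mul_comm]
  simp only [Matrix.conjTranspose_mul, Matrix.conjTranspose_conjTranspose, ← Matrix.mul_assoc]

lemma md_one {m : ℕ} (V : Matrix (Fin m) (Fin m) ℂ) (hV : V * Vᴴ = 1) :
    md V (fun _ => 1) = 1 := by
  simp [md, hV]

lemma md_one' {m : ℕ} (a : Fin m → ℝ) :
    md 1 a = Matrix.diagonal (fun i => (a i : ℂ)) := by
  simp [md]

lemma qf {m : ℕ} (X U V : Matrix (Fin m) (Fin m) ℂ) (hV : V * Vᴴ = 1) (a : Fin m → ℝ) :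
    (Xᴴ * md U a * X).trace.re = ∑ i, ∑ j, a i * ‖(Uᴴ * X * V) i j‖ ^ 2 := by
  have := tr1 X U V a (fun _ => 1)
  rw [md_one V hV, Matrix.mul_one] at this
  rw [this]; simp

lemma qf' {m : ℕ} (Y U V : Matrix (Fin m) (Fin m) ℂ) (hU : U * Uᴴ = 1) (w : Fin m → ℝ) :
    (Yᴴᴴ * md V w * Yᴴ).trace.re = ∑ i, ∑ j, w j * ‖(Uᴴ * Y * V) i j‖ ^ 2 := by
  rw [qf Yᴴ V U hU w, Finset.sum_comm]
  refine Finset.sum_congr rfl fun i _ => Finset.sum_congr rfl fun j _ => ?_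
  have : Vᴴ * Yᴴ * U = (Uᴴ * Y * V)ᴴ := by
    simp [Matrix.conjTranspose_mul, Matrix.mul_assoc]
  rw [this, Matrix.conjTranspose_apply, norm_star]

lemma md_trace {m : ℕ} (V : Matrix (Fin m) (Fin m) ℂ) (hV : Vᴴ * V = 1) (a : Fin m → ℝ) :
    (md V a).trace.re = ∑ i, a i := by
  rw [md, Matrix.trace_mul_comm, ← Matrix.mul_assoc, hV]
  simp [Matrix.trace]

lemma scal_le (a w t : ℝ) (ha : 0 ≤ a) (hw : 0 ≤ w) (ht : 0 < t) (x k : ℂ) :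
    t * (a * w / (t * w + a)) * ‖k‖ ^ 2 ≤ a * ‖x‖ ^ 2 + t * (w * ‖k - x‖ ^ 2) := by
  have h1 : ‖k‖ ≤ ‖x‖ + ‖k - x‖ := by
    calc ‖k‖ = ‖x + (k - x)‖ := by ring_nf
      _ ≤ _ := norm_add_le _ _
  have h2 : ‖k‖ ^ 2 ≤ (‖x‖ + ‖k - x‖) ^ 2 := by gcongr
  rcases (by positivity : 0 ≤ t * w + a).eq_or_lt with h | h
  · rw [← h]; simp; positivity
  · rw [show t * (a * w / (t * w + a)) * ‖k‖ ^ 2 = (t * a * w * ‖k‖ ^ 2) / (t * w + a) by ring,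
      div_le_iff₀ h]
    have h3 : t * a * w * ‖k‖ ^ 2 ≤ t * a * w * (‖x‖ + ‖k - x‖) ^ 2 := by gcongr
    nlinarith [sq_nonneg (a * ‖x‖ - t * w * ‖k - x‖)]

lemma scal_eq (a w t : ℝ) (ha : 0 ≤ a) (hw : 0 ≤ w) (ht : 0 < t) (k : ℂ) :
    a * ‖((t * w / (t * w + a) : ℝ) : ℂ) * k‖ ^ 2
      + t * (w * ‖k - ((t * w / (t * w + a) : ℝ) : ℂ) * k‖ ^ 2)
      = t * (a * w / (t * w + a)) * ‖k‖ ^ 2 := by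
  rcases (by positivity : 0 ≤ t * w + a).eq_or_lt with h | h
  · have h1 : a = 0 := by nlinarith [mul_nonneg ht.le hw]
    have h2 : t * w = 0 := by linarith
    have h3 : w = 0 := by simpa [ht.ne'] using h2
    simp [h1, h3]
  · have : k - ((t * w / (t * w + a) : ℝ) : ℂ) * k = ((a / (t * w + a) : ℝ) : ℂ) * k := by
      have : (a / (t * w + a) : ℝ) = 1 - t * w / (t * w + a) := by field_simp; ring
      rw [this]; push_cast; ring
    rw [this, norm_mul, norm_mul, Complex.norm_real, Complex.norm_real, mul_pow, mul_pow,
      Real.norm_eq_abs, Real.norm_eq_abs, sq_abs, sq_abs]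
    field_simp

/-- integrand -/
noncomputable def gg (s t a w : ℝ) : ℝ := t ^ (s - 1) * (a * w / (t * w + a))

open MeasureTheory Set in
lemma gg_int (s : ℝ) (hs : s ∈ Ioo (0 : ℝ) 1) (a w : ℝ) (ha : 0 ≤ a) (hw : 0 ≤ w) :
    IntegrableOn (fun t => gg s t a w) (Ioi 0) ∧
    (∫ t in Ioi 0, gg s t a w) =
      (a ^ s * w ^ (1 - s)) * ∫ t in Ioi 0, Real.rpowIntegrand₀₁ s t 1 := by
  have hs' : 1 - s ≠ 0 := by have := hs.2; linarith
  rcases hw.eq_or_lt with h | h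
  · subst h
    simp [gg, Real.zero_rpow hs']
  have key : EqOn (fun t => w * Real.rpowIntegrand₀₁ s t (a / w)) (fun t => gg s t a w)
      (Ioi 0) := by
    intro t ht
    have ht : 0 < t := ht
    have : t * w + a ≠ 0 := by positivity
    have h2 : t + a / w ≠ 0 := by positivity
    simp only [gg]
    rw [Real.rpowIntegrand₀₁_eq_pow_div hs ht.le (by positivity)]
    have h3 : t + a / w = (t * w + a) / w := by field_simp
    rw [h3]
    field_simp
  constructor
  · have h0 : IntegrableOn (fun t => w * Real.rpowIntegrand₀₁ s t (a / w)) (Ioi 0) :=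
      (Real.integrableOn_rpowIntegrand₀₁_Ioi hs (by positivity)).const_mul w
    exact h0.congr_fun key measurableSet_Ioi
  · rw [← setIntegral_congr_fun measurableSet_Ioi key, integral_const_mul,
      Real.integral_rpowIntegrand₀₁_eq_rpow_mul_const hs (by positivity), ← mul_assoc]
    congr 1
    rw [Real.div_rpow ha hw, Real.rpow_sub h, Real.rpow_one]
    field_simp

/-- concavity-type inequality between quadratic forms -/
def QLe {m : ℕ} (c : ℝ) (A₁ A₂ A : Matrix (Fin m) (Fin m) ℂ) : Prop :=
  ∀ Y : Matrix (Fin m) (Fin m) ℂ,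
    c * (Yᴴ * A₁ * Y).trace.re + (1 - c) * (Yᴴ * A₂ * Y).trace.re ≤ (Yᴴ * A * Y).trace.re

lemma par_le {m : ℕ} (U V K X : Matrix (Fin m) (Fin m) ℂ) (hU : U * Uᴴ = 1)
    (hV : V * Vᴴ = 1) (a w : Fin m → ℝ) (ha : ∀ i, 0 ≤ a i) (hw : ∀ i, 0 ≤ w i)
    (t : ℝ) (ht : 0 < t) :
    t * ∑ i, ∑ j, (a i * w j / (t * w j + a i)) * ‖(Uᴴ * K * V) i j‖ ^ 2 ≤
      (Xᴴ * md U a * X).trace.re + t * ((K - X)ᴴᴴ * md V w * (K - X)ᴴ).trace.re := by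
  rw [qf X U V hV, qf' (K - X) U V hU, Finset.mul_sum, Finset.mul_sum, ← Finset.sum_add_distrib]
  refine Finset.sum_le_sum fun i _ => ?_
  rw [Finset.mul_sum, Finset.mul_sum, ← Finset.sum_add_distrib]
  refine Finset.sum_le_sum fun j _ => ?_
  have := scal_le (a i) (w j) t (ha i) (hw j) ht ((Uᴴ * X * V) i j) ((Uᴴ * K * V) i j)
  rw [Matrix.mul_sub, Matrix.sub_mul, Matrix.sub_apply]
  linarith

lemma par_eq {m : ℕ} (U V K : Matrix (Fin m) (Fin m) ℂ) (hU : U * Uᴴ = 1) (hU' : Uᴴ * U = 1)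
    (hV : V * Vᴴ = 1) (hV' : Vᴴ * V = 1)
    (a w : Fin m → ℝ) (ha : ∀ i, 0 ≤ a i) (hw : ∀ i, 0 ≤ w i)
    (t : ℝ) (ht : 0 < t) : ∃ X : Matrix (Fin m) (Fin m) ℂ,
    (Xᴴ * md U a * X).trace.re + t * ((K - X)ᴴᴴ * md V w * (K - X)ᴴ).trace.re =
    t * ∑ i, ∑ j, (a i * w j / (t * w j + a i)) * ‖(Uᴴ * K * V) i j‖ ^ 2 := by
  let x : Matrix (Fin m) (Fin m) ℂ := Matrix.of fun i j =>
    ((t * w j / (t * w j + a i) : ℝ) : ℂ) * (Uᴴ * K * V) i j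
  refine ⟨U * x * Vᴴ, ?_⟩
  have hx : Uᴴ * (U * x * Vᴴ) * V = x := by
    calc Uᴴ * (U * x * Vᴴ) * V = (Uᴴ * U) * x * (Vᴴ * V) := by simp only [Matrix.mul_assoc]
      _ = x := by rw [hU', hV']; simp
  rw [qf _ U V hV, qf' _ U V hU, Finset.mul_sum, Finset.mul_sum, ← Finset.sum_add_distrib]
  refine Finset.sum_congr rfl fun i _ => ?_
  rw [Finset.mul_sum, Finset.mul_sum, ← Finset.sum_add_distrib]
  refine Finset.sum_congr rfl fun j _ => ?_
  have := scal_eq (a i) (w j) t (ha i) (hw j) ht ((Uᴴ * K * V) i j)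
  rw [Matrix.mul_sub, Matrix.sub_mul, Matrix.sub_apply, hx]
  simp only [x, Matrix.of_apply]
  linarith

/-- unitary plus nonnegative eigenvalues -/
structure Dec {m : ℕ} (U : Matrix (Fin m) (Fin m) ℂ) (a : Fin m → ℝ) : Prop where
  h1 : U * Uᴴ = 1
  h2 : Uᴴ * U = 1
  nn : ∀ i, 0 ≤ a i

lemma par_conc {m : ℕ} {U₁ U₂ U V₁ V₂ V : Matrix (Fin m) (Fin m) ℂ} {a₁ a₂ a w₁ w₂ w : Fin m → ℝ}
    (hU₁ : Dec U₁ a₁) (hU₂ : Dec U₂ a₂) (hU : Dec U a)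
    (hV₁ : Dec V₁ w₁) (hV₂ : Dec V₂ w₂) (hV : Dec V w) (c : ℝ) (hc0 : 0 ≤ c) (hc1 : c ≤ 1)
    (hA : QLe c (md U₁ a₁) (md U₂ a₂) (md U a)) (hW : QLe c (md V₁ w₁) (md V₂ w₂) (md V w))
    (K : Matrix (Fin m) (Fin m) ℂ) (t : ℝ) (ht : 0 < t) :
    c * (∑ i, ∑ j, (a₁ i * w₁ j / (t * w₁ j + a₁ i)) * ‖(U₁ᴴ * K * V₁) i j‖ ^ 2) +
    (1 - c) * (∑ i, ∑ j, (a₂ i * w₂ j / (t * w₂ j + a₂ i)) * ‖(U₂ᴴ * K * V₂) i j‖ ^ 2) ≤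
    ∑ i, ∑ j, (a i * w j / (t * w j + a i)) * ‖(Uᴴ * K * V) i j‖ ^ 2 := by
  obtain ⟨X, hX⟩ := par_eq U V K hU.h1 hU.h2 hV.h1 hV.h2 a w hU.nn hV.nn t ht
  have e1 := par_le U₁ V₁ K X hU₁.h1 hV₁.h1 a₁ w₁ hU₁.nn hV₁.nn t ht
  have e2 := par_le U₂ V₂ K X hU₂.h1 hV₂.h1 a₂ w₂ hU₂.nn hV₂.nn t ht
  have f1 := hA X
  have f2 := mul_le_mul_of_nonneg_left (hW (K - X)ᴴ) ht.le
  have g1 := mul_le_mul_of_nonneg_left e1 hc0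
  have g2 := mul_le_mul_of_nonneg_left e2 (by linarith : 0 ≤ 1 - c)
  refine le_of_mul_le_mul_left ?_ ht
  linarith

open MeasureTheory Set in
lemma int_sum {m : ℕ} (U V K : Matrix (Fin m) (Fin m) ℂ) (a w : Fin m → ℝ)
    (ha : ∀ i, 0 ≤ a i) (hw : ∀ i, 0 ≤ w i) (s : ℝ) (hs : s ∈ Ioo (0 : ℝ) 1) :
    IntegrableOn (fun t => t ^ (s - 1) *
      ∑ i, ∑ j, (a i * w j / (t * w j + a i)) * ‖(Uᴴ * K * V) i j‖ ^ 2) (Ioi 0) ∧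
    (∫ t in Ioi 0, t ^ (s - 1) *
      ∑ i, ∑ j, (a i * w j / (t * w j + a i)) * ‖(Uᴴ * K * V) i j‖ ^ 2) =
    (∫ t in Ioi 0, Real.rpowIntegrand₀₁ s t 1) *
      ∑ i, ∑ j, a i ^ s * w j ^ (1 - s) * ‖(Uᴴ * K * V) i j‖ ^ 2 := by
  have e : (fun t : ℝ => t ^ (s - 1) *
      ∑ i, ∑ j, (a i * w j / (t * w j + a i)) * ‖(Uᴴ * K * V) i j‖ ^ 2) =
      fun t => ∑ i, ∑ j, gg s t (a i) (w j) * ‖(Uᴴ * K * V) i j‖ ^ 2 := by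
    funext t
    simp only [gg, Finset.mul_sum, mul_assoc]
  have hi : ∀ i j, IntegrableOn (fun t => gg s t (a i) (w j) * ‖(Uᴴ * K * V) i j‖ ^ 2) (Ioi 0) :=
    fun i j => (gg_int s hs _ _ (ha i) (hw j)).1.mul_const _
  rw [e]
  constructor
  · exact integrable_finsetSum _ fun i _ => integrable_finsetSum _ fun j _ => hi i j
  · rw [integral_finsetSum _ fun i _ => integrable_finsetSum _ fun j _ => hi i j, Finset.mul_sum]
    refine Finset.sum_congr rfl fun i _ => ?_
    rw [integral_finsetSum _ fun j _ => hi i j, Finset.mul_sum]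
    refine Finset.sum_congr rfl fun j _ => ?_
    rw [integral_mul_const, (gg_int s hs _ _ (ha i) (hw j)).2]
    ring

open MeasureTheory Set in
lemma lieb {m : ℕ} {U₁ U₂ U V₁ V₂ V : Matrix (Fin m) (Fin m) ℂ} {a₁ a₂ a w₁ w₂ w : Fin m → ℝ}
    (hU₁ : Dec U₁ a₁) (hU₂ : Dec U₂ a₂) (hU : Dec U a)
    (hV₁ : Dec V₁ w₁) (hV₂ : Dec V₂ w₂) (hV : Dec V w) (c : ℝ) (hc0 : 0 ≤ c) (hc1 : c ≤ 1)
    (hA : QLe c (md U₁ a₁) (md U₂ a₂) (md U a)) (hW : QLe c (md V₁ w₁) (md V₂ w₂) (md V w))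
    (K : Matrix (Fin m) (Fin m) ℂ) (s : ℝ) (hs0 : 0 < s) (hs1 : s < 1) :
    c * (∑ i, ∑ j, a₁ i ^ s * w₁ j ^ (1 - s) * ‖(U₁ᴴ * K * V₁) i j‖ ^ 2) +
    (1 - c) * (∑ i, ∑ j, a₂ i ^ s * w₂ j ^ (1 - s) * ‖(U₂ᴴ * K * V₂) i j‖ ^ 2) ≤
    ∑ i, ∑ j, a i ^ s * w j ^ (1 - s) * ‖(Uᴴ * K * V) i j‖ ^ 2 := by
  have hs : s ∈ Ioo (0 : ℝ) 1 := ⟨hs0, hs1⟩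
  have hC := Real.integral_rpowIntegrand₀₁_one_pos hs
  obtain ⟨i1, j1⟩ := int_sum U₁ V₁ K a₁ w₁ hU₁.nn hV₁.nn s hs
  obtain ⟨i2, j2⟩ := int_sum U₂ V₂ K a₂ w₂ hU₂.nn hV₂.nn s hs
  obtain ⟨i3, j3⟩ := int_sum U V K a w hU.nn hV.nn s hs
  refine le_of_mul_le_mul_left ?_ hC
  rw [mul_add, mul_left_comm, mul_left_comm _ (1 - c), ← j1, ← j2, ← j3, ← integral_const_mul,
    ← integral_const_mul, ← integral_add (i1.const_mul c) (i2.const_mul (1 - c))]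
  refine setIntegral_mono_on ((i1.const_mul c).add (i2.const_mul (1 - c))) i3 measurableSet_Ioi ?_
  intro t ht
  have := mul_le_mul_of_nonneg_left
    (par_conc hU₁ hU₂ hU hV₁ hV₂ hV c hc0 hc1 hA hW K t ht)
    (Real.rpow_nonneg (le_of_lt ht) (s - 1))
  linarith

lemma Dec.rpow {m : ℕ} {U : Matrix (Fin m) (Fin m) ℂ} {a : Fin m → ℝ} (h : Dec U a) (p : ℝ) :
    Dec U (fun i => a i ^ p) := ⟨h.h1, h.h2, fun i => Real.rpow_nonneg (h.nn i) p⟩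

/-- operator concavity of powers -/
lemma op_conc {m : ℕ} {U₁ U₂ U : Matrix (Fin m) (Fin m) ℂ} {a₁ a₂ a : Fin m → ℝ}
    (hU₁ : Dec U₁ a₁) (hU₂ : Dec U₂ a₂) (hU : Dec U a) (c : ℝ) (hc0 : 0 ≤ c) (hc1 : c ≤ 1)
    (hA : QLe c (md U₁ a₁) (md U₂ a₂) (md U a)) (s : ℝ) (hs0 : 0 < s) (hs1 : s ≤ 1) :
    QLe c (md U₁ (fun i => a₁ i ^ s)) (md U₂ (fun i => a₂ i ^ s)) (md U (fun i => a i ^ s)) := by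
  rcases hs1.eq_or_lt with rfl | hs1
  · simpa using hA
  intro Y
  have h1 : Dec (1 : Matrix (Fin m) (Fin m) ℂ) (fun _ => 1) := ⟨by simp, by simp, by simp⟩
  have h2 : QLe c (md (1 : Matrix (Fin m) (Fin m) ℂ) (fun _ => 1)) (md 1 (fun _ => 1))
      (md 1 (fun _ => 1)) := fun Y => by linarith
  have := lieb hU₁ hU₂ hU h1 h1 h1 c hc0 hc1 hA h2 Y s hs0 hs1
  rw [qf Y U₁ 1 (by simp), qf Y U₂ 1 (by simp), qf Y U 1 (by simp)]
  simpa using this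

lemma spec {m : ℕ} {A : Matrix (Fin m) (Fin m) ℂ} (hA : A.PosSemidef) :
    ∃ U a, Dec U a ∧ A = md U a ∧ ∀ p, mpow A p = md U (fun i => a i ^ p) := by
  refine ⟨hA.1.eigenvectorUnitary, hA.1.eigenvalues, ⟨?_, ?_, hA.eigenvalues_nonneg⟩, ?_, ?_⟩
  · exact Unitary.coe_mul_star_self hA.1.eigenvectorUnitary
  · exact Unitary.coe_star_mul_self hA.1.eigenvectorUnitary
  · conv_lhs => rw [hA.1.spectral_theorem]
    rfl
  · intro p
    rw [mpow, dif_pos hA.1]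
    rfl

lemma md_psd {m : ℕ} {U : Matrix (Fin m) (Fin m) ℂ} {a : Fin m → ℝ} (h : Dec U a) :
    (md U a).PosSemidef := by
  have : (Matrix.diagonal (fun i => (a i : ℂ))).PosSemidef :=
    Matrix.PosSemidef.diagonal fun i => by simpa using h.nn i
  exact this.mul_mul_conjTranspose_same U

lemma young_tr {m : ℕ} {U V : Matrix (Fin m) (Fin m) ℂ} {x z : Fin m → ℝ} (hU : Dec U x)
    (hV : Dec V z) (q : ℝ) (hq : 1 < q) :
    q * (md U x * md V (fun i => z i ^ (1 - 1 / q))).trace.re ≤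
      (md U (fun i => x i ^ q)).trace.re + (q - 1) * (md V z).trace.re := by
  have e0 := tr1 1 U V x (fun i => z i ^ (1 - 1 / q))
  have e1 := tr1 1 U V (fun i => x i ^ q) (fun _ => 1)
  have e2 := tr1 1 U V (fun _ => 1) z
  rw [md_one _ hV.h1] at e1
  rw [md_one _ hU.h1] at e2
  simp only [Matrix.conjTranspose_one, Matrix.one_mul, Matrix.mul_one] at e0 e1 e2
  rw [e0, e1, e2, Finset.mul_sum, Finset.mul_sum, ← Finset.sum_add_distrib]
  refine Finset.sum_le_sum fun i _ => ?_
  rw [Finset.mul_sum, Finset.mul_sum, ← Finset.sum_add_distrib]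
  refine Finset.sum_le_sum fun j _ => ?_
  have hx := hU.nn i
  have hz := hV.nn j
  have hq0 : 0 < q := by linarith
  have hq1 : 1 / q ≤ 1 := by rw [div_le_one hq0]; linarith
  have hy := Real.geom_mean_le_arith_mean2_weighted (w₁ := 1 / q) (w₂ := 1 - 1 / q)
    (p₁ := x i ^ q) (p₂ := z j) (by positivity) (by linarith) (by positivity) hz (by ring)
  rw [← Real.rpow_mul hx, mul_one_div_cancel hq0.ne', Real.rpow_one] at hy
  have hy2 : q * (x i * z j ^ (1 - 1 / q)) ≤ x i ^ q + (q - 1) * z j := by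
    have := mul_le_mul_of_nonneg_left hy hq0.le
    have e : q * (1 / q * x i ^ q + (1 - 1 / q) * z j) = x i ^ q + (q - 1) * z j := by
      field_simp
    linarith
  have := mul_le_mul_of_nonneg_right hy2 (sq_nonneg ‖(Uᴴ * V) i j‖)
  linarith

lemma md_mul {m : ℕ} {U : Matrix (Fin m) (Fin m) ℂ} {a : Fin m → ℝ} (h : Dec U a)
    (b d : Fin m → ℝ) : md U b * md U d = md U (fun i => b i * d i) := by
  calc md U b * md U d = U * diagonal (fun i => (b i : ℂ)) * (Uᴴ * U) *
        diagonal (fun i => (d i : ℂ)) * Uᴴ := by simp only [md, Matrix.mul_assoc]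
    _ = _ := by
      rw [h.h2, Matrix.mul_one, Matrix.mul_assoc U, Matrix.diagonal_mul_diagonal]
      simp [md]

lemma small_q {m : ℕ} {U₁ U₂ U : Matrix (Fin m) (Fin m) ℂ} {a₁ a₂ a : Fin m → ℝ}
    (hU₁ : Dec U₁ a₁) (hU₂ : Dec U₂ a₂) (hU : Dec U a) (c : ℝ) (hc0 : 0 ≤ c) (hc1 : c ≤ 1)
    (hA : QLe c (md U₁ a₁) (md U₂ a₂) (md U a)) (q : ℝ) (hq0 : 0 < q) (hq1 : q ≤ 1) :
    c * (∑ i, a₁ i ^ q) + (1 - c) * (∑ i, a₂ i ^ q) ≤ ∑ i, a i ^ q := by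
  -- diagonal entries
  have ent : ∀ (W : Matrix (Fin m) (Fin m) ℂ) (b : Fin m → ℝ) (j : Fin m), 
      ((U * Matrix.single j j 1)ᴴ * md W b * (U * Matrix.single j j 1)).trace.re
        = ∑ i, b i * ‖(Wᴴ * U) i j‖ ^ 2 := by
    intro W b j
    rw [qf _ W 1 (by simp)]
    refine Finset.sum_congr rfl fun i _ => ?_
    rw [Matrix.mul_one, ← Matrix.mul_assoc, Finset.sum_eq_single j]
    · simp
    · intro k _ hk
      simp [hk]
    · simp
  have row : ∀ (W : Matrix (Fin m) (Fin m) ℂ), W * Wᴴ = 1 → Wᴴ * W = 1 → 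
      (∀ j, ∑ i, ‖(Wᴴ * U) i j‖ ^ 2 = 1) ∧ (∀ i, ∑ j, ‖(Wᴴ * U) i j‖ ^ 2 = 1) := by
    intro W h1 h2
    have k1 : (Wᴴ * U)ᴴ * (Wᴴ * U) = 1 := by
      calc (Wᴴ * U)ᴴ * (Wᴴ * U) = Uᴴ * (W * Wᴴ) * U := by simp [Matrix.mul_assoc]
        _ = 1 := by rw [h1, Matrix.mul_one, hU.h2]
    have k2 : (Wᴴ * U) * (Wᴴ * U)ᴴ = 1 := by
      calc (Wᴴ * U) * (Wᴴ * U)ᴴ = Wᴴ * (U * Uᴴ) * W := by simp [Matrix.mul_assoc]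
        _ = 1 := by rw [hU.h1, Matrix.mul_one, h2]
    constructor
    · intro j
      have := congrArg Complex.re (congrFun (congrFun k1 j) j)
      rw [Matrix.mul_apply, Complex.re_sum] at this
      simp only [Matrix.one_apply_eq, Complex.one_re] at this
      rw [← this]
      refine Finset.sum_congr rfl fun i _ => ?_
      rw [Matrix.conjTranspose_apply, ← Complex.normSq_eq_norm_sq]
      simp [Complex.normSq_apply]
    · intro i
      have := congrArg Complex.re (congrFun (congrFun k2 i) i)
      rw [Matrix.mul_apply, Complex.re_sum] at this
      simp only [Matrix.one_apply_eq, Complex.one_re] at this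
      rw [← this]
      refine Finset.sum_congr rfl fun j _ => ?_
      rw [Matrix.conjTranspose_apply, ← Complex.normSq_eq_norm_sq]
      simp [Complex.normSq_apply]
  have conc := Real.concaveOn_rpow hq0.le hq1
  have step : ∀ (W : Matrix (Fin m) (Fin m) ℂ) (b : Fin m → ℝ), Dec W b →
      ∑ i, b i ^ q ≤ ∑ j, (∑ i, b i * ‖(Wᴴ * U) i j‖ ^ 2) ^ q := by
    intro W b h
    obtain ⟨r1, r2⟩ := row W h.h1 h.h2
    calc ∑ i, b i ^ q = ∑ i, ∑ j, ‖(Wᴴ * U) i j‖ ^ 2 * b i ^ q := by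
          refine Finset.sum_congr rfl fun i _ => ?_
          rw [← Finset.sum_mul, r2, one_mul]
      _ = ∑ j, ∑ i, ‖(Wᴴ * U) i j‖ ^ 2 * b i ^ q := Finset.sum_comm
      _ ≤ _ := by
          refine Finset.sum_le_sum fun j _ => ?_
          have := conc.le_map_sum (t := Finset.univ) (w := fun i => ‖(Wᴴ * U) i j‖ ^ 2) (p := b)
            (fun i _ => by positivity) (r1 j) (fun i _ => h.nn i)
          simp only [smul_eq_mul] at this
          refine this.trans_eq ?_
          simp only [mul_comm]
  have s1 := mul_le_mul_of_nonneg_left (step U₁ a₁ hU₁) hc0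
  have s2 := mul_le_mul_of_nonneg_left (step U₂ a₂ hU₂) (by linarith : 0 ≤ 1 - c)
  refine (add_le_add s1 s2).trans ?_
  rw [Finset.mul_sum, Finset.mul_sum, ← Finset.sum_add_distrib]
  refine Finset.sum_le_sum fun j _ => ?_
  have hj := hA (U * Matrix.single j j 1)
  rw [ent, ent, ent, hU.h2] at hj
  have e : ∑ i, a i * ‖(1 : Matrix (Fin m) (Fin m) ℂ) i j‖ ^ 2 = a j := by
    rw [Finset.sum_eq_single j]
    · simp
    · intro k _ hk
      simp [hk]
    · simp
  rw [e] at hj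
  have p1 : 0 ≤ ∑ i, a₁ i * ‖(U₁ᴴ * U) i j‖ ^ 2 :=
    Finset.sum_nonneg fun i _ => mul_nonneg (hU₁.nn i) (by positivity)
  have p2 : 0 ≤ ∑ i, a₂ i * ‖(U₂ᴴ * U) i j‖ ^ 2 :=
    Finset.sum_nonneg fun i _ => mul_nonneg (hU₂.nn i) (by positivity)
  have hcc := conc.2 (x := _) (y := _) p1 p2 hc0 (by linarith : 0 ≤ 1 - c) (by ring)
  simp only [smul_eq_mul] at hcc
  refine hcc.trans (Real.rpow_le_rpow ?_ hj hq0.le)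
  have : 0 ≤ 1 - c := by linarith
  positivity

theorem stmt12 {m : ℕ} (B : Matrix (Fin m) (Fin m) ℂ) (s r : ℝ)
    (hs0 : 0 < s) (hs1 : s < 1) (hr0 : 0 < r) (hr1 : r ≤ 1)
    (A₁ A₂ : Matrix (Fin m) (Fin m) ℂ) (hA₁ : A₁.PosSemidef) (hA₂ : A₂.PosSemidef)
    (c : ℝ) (hc0 : 0 ≤ c) (hc1 : c ≤ 1) :
    c * (mpow (Bᴴ * mpow A₁ s * B) (r / s)).trace.re +
        (1 - c) * (mpow (Bᴴ * mpow A₂ s * B) (r / s)).trace.re ≤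
      (mpow (Bᴴ * mpow ((c : ℂ) • A₁ + ((1 : ℂ) - (c : ℂ)) • A₂) s * B) (r / s)).trace.re := by

  have hc1' : 0 ≤ 1 - c := by linarith
  have comb : ∀ {P Q : Matrix (Fin m) (Fin m) ℂ}, P.PosSemidef → Q.PosSemidef →
      ((c : ℂ) • P + ((1 : ℂ) - (c : ℂ)) • Q).PosSemidef := by
    intro P Q hP hQ
    refine (hP.smul (by simpa using hc0)).add (hQ.smul ?_)
    have : ((1 : ℂ) - (c : ℂ)) = ((1 - c : ℝ) : ℂ) := by push_cast; ring
    rw [this]; exact Complex.zero_le_real.mpr hc1'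
  have combQ : ∀ P Q : Matrix (Fin m) (Fin m) ℂ,
      QLe c P Q ((c : ℂ) • P + ((1 : ℂ) - (c : ℂ)) • Q) := by
    intro P Q Y
    have : ((1 : ℂ) - (c : ℂ)) = ((1 - c : ℝ) : ℂ) := by push_cast; ring
    rw [this]
    simp only [Matrix.mul_add, Matrix.add_mul, Matrix.mul_smul, Matrix.smul_mul,
      Matrix.trace_add, Matrix.trace_smul, smul_eq_mul, Complex.add_re, Complex.re_ofReal_mul]
    exact le_rfl
  have hA := comb hA₁ hA₂
  have hAQ := combQ A₁ A₂
  generalize ((c : ℂ) • A₁ + ((1 : ℂ) - (c : ℂ)) • A₂) = A at hA hAQ ⊢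
  obtain ⟨U₁, a₁, dU₁, eA₁, pA₁⟩ := spec hA₁
  obtain ⟨U₂, a₂, dU₂, eA₂, pA₂⟩ := spec hA₂
  obtain ⟨U, a, dU, eA, pA⟩ := spec hA
  rw [pA₁, pA₂, pA]
  rw [eA₁, eA₂, eA] at hAQ
  have psd : ∀ {W : Matrix (Fin m) (Fin m) ℂ} {b : Fin m → ℝ}, Dec W b →
      (Bᴴ * md W (fun i => b i ^ s) * B).PosSemidef := fun h =>
    (md_psd (h.rpow s)).conjTranspose_mul_mul_same B
  obtain ⟨V₁, x₁, dV₁, eX₁, pX₁⟩ := spec (psd dU₁)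
  obtain ⟨V₂, x₂, dV₂, eX₂, pX₂⟩ := spec (psd dU₂)
  obtain ⟨V, x, dV, eX, pX⟩ := spec (psd dU)
  rw [pX₁, pX₂, pX]
  have hq0 : 0 < r / s := by positivity
  rcases le_or_gt (r / s) 1 with hq | hq
  · rw [md_trace _ dV₁.h2, md_trace _ dV₂.h2, md_trace _ dV.h2]
    refine small_q dV₁ dV₂ dV c hc0 hc1 ?_ _ hq0 hq
    intro Y
    have := op_conc dU₁ dU₂ dU c hc0 hc1 hAQ s hs0 hs1.le (B * Y)
    rw [← eX₁, ← eX₂, ← eX]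
    simpa only [Matrix.conjTranspose_mul, Matrix.mul_assoc] using this
  · have dZ₁ := dV₁.rpow (r / s)
    have dZ₂ := dV₂.rpow (r / s)
    have hZ := comb (md_psd dZ₁) (md_psd dZ₂)
    have hZQ := combQ (md V₁ fun i => x₁ i ^ (r / s)) (md V₂ fun i => x₂ i ^ (r / s))
    have hZtr : ((c : ℂ) • (md V₁ fun i => x₁ i ^ (r / s)) +
        ((1 : ℂ) - (c : ℂ)) • (md V₂ fun i => x₂ i ^ (r / s))).trace.re =
        c * (md V₁ fun i => x₁ i ^ (r / s)).trace.re +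
        (1 - c) * (md V₂ fun i => x₂ i ^ (r / s)).trace.re := by
      have : ((1 : ℂ) - (c : ℂ)) = ((1 - c : ℝ) : ℂ) := by push_cast; ring
      rw [this]
      simp only [Matrix.trace_add, Matrix.trace_smul, smul_eq_mul, Complex.add_re,
        Complex.re_ofReal_mul]
    generalize ((c : ℂ) • (md V₁ fun i => x₁ i ^ (r / s)) +
        ((1 : ℂ) - (c : ℂ)) • (md V₂ fun i => x₂ i ^ (r / s))) = Z at hZ hZQ hZtr
    obtain ⟨W, z, dW, eZ, -⟩ := spec hZ
    rw [eZ] at hZQ hZtr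
    set q := r / s with hqdef
    have hs1' : 0 < 1 - s := by linarith
    have hqs : q * s = r := by rw [hqdef]; field_simp
    have hiq : s ≤ 1 / q := by rw [le_div_iff₀ hq0]; nlinarith
    have hiq1 : 1 / q < 1 := by rw [div_lt_one hq0]; exact hq
    have hu0 : 0 < (1 - 1 / q) / (1 - s) := div_pos (by linarith) hs1'
    have hu1 : (1 - 1 / q) / (1 - s) ≤ 1 := by rw [div_le_one hs1']; linarith
    set u := (1 - 1 / q) / (1 - s) with hu
    have huq : u * (1 - s) = 1 - 1 / q := by rw [hu]; field_simp
    have hWQ := op_conc dZ₁ dZ₂ dW c hc0 hc1 hZQ u hu0 hu1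
    have L := lieb dU₁ dU₂ dU (dZ₁.rpow u) (dZ₂.rpow u) (dW.rpow u) c hc0 hc1 hAQ hWQ B s hs0 hs1
    have pw : ∀ y : ℝ, 0 ≤ y → (y ^ u) ^ (1 - s) = y ^ (1 - 1 / q) := by
      intro y hy
      rw [← Real.rpow_mul hy, huq]
    simp only [pw _ (dZ₁.nn _), pw _ (dZ₂.nn _), pw _ (dW.nn _)] at L
    rw [← tr1 B U₁ V₁ (fun i => a₁ i ^ s) (fun j => (x₁ j ^ q) ^ (1 - 1 / q)),
      ← tr1 B U₂ V₂ (fun i => a₂ i ^ s) (fun j => (x₂ j ^ q) ^ (1 - 1 / q)),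
      ← tr1 B U W (fun i => a i ^ s) (fun j => z j ^ (1 - 1 / q)), eX₁, eX₂, eX,
      md_mul dV₁, md_mul dV₂] at L
    have xx : ∀ y : ℝ, 0 ≤ y → y * (y ^ q) ^ (1 - 1 / q) = y ^ q := by
      intro y hy
      rcases hy.eq_or_lt with rfl | hy'
      · simp [Real.zero_rpow hq0.ne']
      · rw [← Real.rpow_mul hy]
        nth_rewrite 1 [← Real.rpow_one y]
        rw [← Real.rpow_add hy']
        congr 1
        field_simp
        ring
    simp only [xx _ (dV₁.nn _), xx _ (dV₂.nn _)] at L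
    have Yg := young_tr dV dW q hq
    rw [hZtr] at Yg
    have := mul_le_mul_of_nonneg_left L hq0.le
    linarith
end

section
/- Let 0 < s, t with s + t ≤ 1, and let Φ : M_m(ℂ) → M_n(ℂ) be a semiunital Schwarz map with Φ†(I) positive definite. Then for all positive definite X, Y ∈ M_n(ℂ) and all K ∈ M_n(ℂ): tr[Φ†(K*) Φ†(Y)^{-s} Φ†(K) Φ†(X)^{-t}] ≤ (n/m)^{1-(s+t)} tr[K* Y^{-s} K X^{-t}]. -/
open Matrix
open scoped ComplexOrder

open Real Set MeasureTheory in
lemma aux_dual {ι κ : Type*} [Fintype ι] [Fintype κ] (V : (ι → ℂ) → (κ → ℂ)) (V' : (κ → ℂ) → (ι → ℂ))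
    (hV : ∀ w z, ∑ k, star (z k) * V w k = ∑ i, star (V' z i) * w i)
    (a : ι → ℝ) (b : κ → ℝ) (ha : ∀ i, 0 < a i) (hb : ∀ k, 0 < b k)
    (h : ∀ w, ∑ k, b k * ‖V w k‖ ^ 2 ≤ ∑ i, a i * ‖w i‖ ^ 2) (z : κ → ℂ) :
    ∑ i, (a i)⁻¹ * ‖V' z i‖ ^ 2 ≤ ∑ k, (b k)⁻¹ * ‖z k‖ ^ 2 := by
  set w : ι → ℂ := fun i => ((a i)⁻¹ : ℝ) * V' z i with hw
  have h1 : ∑ i, a i * ‖w i‖ ^ 2 = ∑ i, (a i)⁻¹ * ‖V' z i‖ ^ 2 := by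
    refine Finset.sum_congr rfl fun i _ => ?_
    have := (ha i).ne'
    simp only [hw, norm_mul, Complex.norm_real, Real.norm_eq_abs, mul_pow, sq_abs]
    field_simp
  have h2 : (∑ i, star (V' z i) * w i).re = ∑ i, (a i)⁻¹ * ‖V' z i‖ ^ 2 := by
    rw [Complex.re_sum]
    refine Finset.sum_congr rfl fun i _ => ?_
    have : star (V' z i) * w i = (((a i)⁻¹ * ‖V' z i‖ ^ 2 : ℝ) : ℂ) := by
      simp only [hw]
      push_cast
      rw [← Complex.conj_mul']
      simp only [Complex.star_def]
      ring
    rw [this, Complex.ofReal_re]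
  have h3 : (∑ k, star (z k) * V w k).re ≤
      ∑ k, ((b k)⁻¹ * ‖z k‖ ^ 2 + b k * ‖V w k‖ ^ 2) / 2 := by
    rw [Complex.re_sum]
    refine Finset.sum_le_sum fun k _ => ?_
    refine (Complex.re_le_norm _).trans ?_
    rw [norm_mul, norm_star]
    have hk := hb k
    have : (b k)⁻¹ * ‖z k‖ ^ 2 + b k * ‖V w k‖ ^ 2 - 2 * (‖z k‖ * ‖V w k‖) =
      (b k)⁻¹ * (‖z k‖ - b k * ‖V w k‖) ^ 2 := by field_simp; ring
    have h0 : 0 ≤ (b k)⁻¹ * (‖z k‖ - b k * ‖V w k‖) ^ 2 := by positivity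
    linarith
  rw [← Finset.sum_div, Finset.sum_add_distrib] at h3
  rw [hV, h2] at h3
  have := h w
  rw [h1] at this
  linarith

open Real Set MeasureTheory in
lemma aux_int {p a1 a2 : ℝ} (hp : p ∈ Ioo (0:ℝ) 1) (h1 : 0 < a1) (h2 : 0 < a2) :
    IntegrableOn (fun l : ℝ => l ^ (p - 1) * (a1 + l * a2)⁻¹) (Ioi 0) ∧
    ∫ l in Ioi (0:ℝ), l ^ (p - 1) * (a1 + l * a2)⁻¹ =
      (a1 ^ (1 - p) * a2 ^ p)⁻¹ * ∫ t in Ioi (0:ℝ), rpowIntegrand₀₁ p t 1 := by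
  have hx : 0 ≤ a1 / a2 := by positivity
  have e : EqOn (fun l : ℝ => a1⁻¹ * rpowIntegrand₀₁ p l (a1 / a2))
      (fun l : ℝ => l ^ (p - 1) * (a1 + l * a2)⁻¹) (Ioi 0) := by
    intro l hl
    have hl' : 0 < l := hl
    simp only
    rw [rpowIntegrand₀₁_eq_pow_div hp hl'.le hx]
    have : l + a1 / a2 ≠ 0 := by positivity
    have : a1 + l * a2 ≠ 0 := by positivity
    field_simp
    ring
  constructor
  · exact IntegrableOn.congr_fun ((integrableOn_rpowIntegrand₀₁_Ioi hp hx).const_mul _) e measurableSet_Ioi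
  · rw [← setIntegral_congr_fun measurableSet_Ioi e, integral_const_mul,
      integral_rpowIntegrand₀₁_eq_rpow_mul_const hp hx, ← mul_assoc]
    congr 1
    rw [Real.div_rpow h1.le h2.le, Real.rpow_sub h1, Real.rpow_one]
    have := Real.rpow_pos_of_pos h1 p
    have := Real.rpow_pos_of_pos h2 p
    field_simp

open Real Set MeasureTheory in
lemma aux_interp {ι κ : Type*} [Fintype ι] [Fintype κ] (V : (ι → ℂ) → (κ → ℂ)) (V' : (κ → ℂ) → (ι → ℂ))
    (hV : ∀ w z, ∑ k, star (z k) * V w k = ∑ i, star (V' z i) * w i)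
    (a1 a2 : ι → ℝ) (b1 b2 : κ → ℝ) (ha1 : ∀ i, 0 < a1 i) (hb1 : ∀ k, 0 < b1 k)
    (ha2 : ∀ i, 0 < a2 i) (hb2 : ∀ k, 0 < b2 k)
    (h1 : ∀ w, ∑ k, b1 k * ‖V w k‖ ^ 2 ≤ ∑ i, a1 i * ‖w i‖ ^ 2)
    (h2 : ∀ w, ∑ k, b2 k * ‖V w k‖ ^ 2 ≤ ∑ i, a2 i * ‖w i‖ ^ 2) {p : ℝ} (hp : p ∈ Ioo (0:ℝ) 1)
    (z : κ → ℂ) :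
    ∑ i, (a1 i ^ (1 - p) * a2 i ^ p)⁻¹ * ‖V' z i‖ ^ 2 ≤
      ∑ k, (b1 k ^ (1 - p) * b2 k ^ p)⁻¹ * ‖z k‖ ^ 2 := by
  set C := ∫ t in Ioi (0:ℝ), rpowIntegrand₀₁ p t 1 with hC
  have hCpos : 0 < C := integral_rpowIntegrand₀₁_one_pos hp
  have key : ∀ l ∈ Ioi (0:ℝ), ∑ i, ‖V' z i‖ ^ 2 * (l ^ (p - 1) * (a1 i + l * a2 i)⁻¹) ≤
      ∑ k, ‖z k‖ ^ 2 * (l ^ (p - 1) * (b1 k + l * b2 k)⁻¹) := by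
    intro l hl
    have hl' : 0 < l := hl
    have := aux_dual V V' hV (fun i => a1 i + l * a2 i) (fun i => b1 i + l * b2 i)
      (fun i => by have := ha1 i; have := ha2 i; positivity)
      (fun i => by have := hb1 i; have := hb2 i; positivity)
      (fun w => by
        have e1 := h1 w
        have e2 := mul_le_mul_of_nonneg_left (h2 w) hl'.le
        rw [Finset.mul_sum, Finset.mul_sum] at e2
        have := add_le_add e1 e2
        rw [← Finset.sum_add_distrib, ← Finset.sum_add_distrib] at this
        refine (this.trans' (le_of_eq ?_)).trans (le_of_eq ?_) <;> exact Finset.sum_congr rfl fun _ _ => by ring) z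
    have := mul_le_mul_of_nonneg_left this (Real.rpow_nonneg hl'.le (p - 1))
    rw [Finset.mul_sum, Finset.mul_sum] at this
    refine (this.trans' (le_of_eq ?_)).trans (le_of_eq ?_) <;> exact Finset.sum_congr rfl fun _ _ => by ring
  have ia : ∀ i ∈ (Finset.univ : Finset ι), IntegrableOn (fun l : ℝ => ‖V' z i‖ ^ 2 * (l ^ (p - 1) * (a1 i + l * a2 i)⁻¹)) (Ioi 0) :=
    fun i _ => (aux_int hp (ha1 i) (ha2 i)).1.const_mul _
  have ib : ∀ i ∈ (Finset.univ : Finset κ), IntegrableOn (fun l : ℝ => ‖z i‖ ^ 2 * (l ^ (p - 1) * (b1 i + l * b2 i)⁻¹)) (Ioi 0) :=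
    fun i _ => (aux_int hp (hb1 i) (hb2 i)).1.const_mul _
  have := setIntegral_mono_on (integrable_finsetSum _ ia) (integrable_finsetSum _ ib)
    measurableSet_Ioi key
  rw [integral_finsetSum _ ia, integral_finsetSum _ ib] at this
  simp only [integral_const_mul, fun i => (aux_int hp (ha1 i) (ha2 i)).2,
    fun i => (aux_int hp (hb1 i) (hb2 i)).2] at this
  rw [← hC] at this
  refine le_of_mul_le_mul_right ?_ hCpos
  rw [Finset.sum_mul, Finset.sum_mul]
  convert this using 2 <;> ring

lemma aux_interp3 {ι κ : Type*} [Fintype ι] [Fintype κ] (V : (ι → ℂ) → (κ → ℂ)) (V' : (κ → ℂ) → (ι → ℂ))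
    (hV : ∀ w z, ∑ k, star (z k) * V w k = ∑ i, star (V' z i) * w i)
    (a1 a2 : ι → ℝ) (b1 b2 : κ → ℝ) (ha1 : ∀ i, 0 < a1 i) (hb1 : ∀ k, 0 < b1 k)
    (ha2 : ∀ i, 0 < a2 i) (hb2 : ∀ k, 0 < b2 k) (c : ℝ) (hc : 0 < c)
    (h1 : ∀ w, ∑ k, b1 k * ‖V w k‖ ^ 2 ≤ ∑ i, a1 i * ‖w i‖ ^ 2)
    (h2 : ∀ w, ∑ k, b2 k * ‖V w k‖ ^ 2 ≤ ∑ i, a2 i * ‖w i‖ ^ 2)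
    (h3 : ∀ w, ∑ k, 1 * ‖V w k‖ ^ 2 ≤ ∑ i, c * ‖w i‖ ^ 2)
    {s t : ℝ} (hs : 0 < s) (ht : 0 < t) (hst : s + t ≤ 1) (z : κ → ℂ) :
    ∑ i, a1 i ^ (-s) * a2 i ^ (-t) * ‖V' z i‖ ^ 2 ≤
      c ^ (1 - (s + t)) * ∑ k, b1 k ^ (-s) * b2 k ^ (-t) * ‖z k‖ ^ 2 := by
  have hσ : 0 < s + t := by positivity
  set p := t / (s + t) with hpdef
  have hp : p ∈ Set.Ioo (0:ℝ) 1 := ⟨by positivity, by rw [hpdef, div_lt_one hσ]; linarith⟩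
  have hpt : p * (s + t) = t := by rw [hpdef]; field_simp
  have hps : (1 - p) * (s + t) = s := by rw [sub_mul, hpt]; ring
  have H := aux_interp V V' hV a1 a2 b1 b2 ha1 hb1 ha2 hb2 h1 h2 hp
  have pa : ∀ i, 0 < a1 i ^ (1 - p) * a2 i ^ p := fun i =>
    mul_pos (Real.rpow_pos_of_pos (ha1 i) _) (Real.rpow_pos_of_pos (ha2 i) _)
  have pb : ∀ i, 0 < b1 i ^ (1 - p) * b2 i ^ p := fun i =>
    mul_pos (Real.rpow_pos_of_pos (hb1 i) _) (Real.rpow_pos_of_pos (hb2 i) _)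
  have ex : ∀ {x y : ℝ}, 0 < x → 0 < y →
      ((x ^ (1 - p) * y ^ p) ^ (s + t))⁻¹ = x ^ (-s) * y ^ (-t) := by
    intro x y hx hy
    rw [Real.mul_rpow (Real.rpow_nonneg hx.le _) (Real.rpow_nonneg hy.le _), ← Real.rpow_mul hx.le,
      ← Real.rpow_mul hy.le, hpt, hps, mul_inv, Real.rpow_neg hx.le, Real.rpow_neg hy.le]
  rcases hst.eq_or_lt with h | h
  · have e := H z
    rw [h] at ex
    simp only [Real.rpow_one] at ex
    simp only [ex (ha1 _) (ha2 _), ex (hb1 _) (hb2 _)] at e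
    simpa [h] using e
  · have hV' : ∀ w z, ∑ k, star (z k) * V' w k = ∑ i, star (V z i) * w i := by
      intro w z
      have := congrArg star (hV z w)
      simp only [star_sum, star_mul, star_star] at this
      exact this.symm
    have H' : ∀ w, ∑ k, (b1 k ^ (1 - p) * b2 k ^ p) * ‖V w k‖ ^ 2 ≤
        ∑ i, (a1 i ^ (1 - p) * a2 i ^ p) * ‖w i‖ ^ 2 := by
      intro w
      have := aux_dual V' V hV' (fun k => (b1 k ^ (1 - p) * b2 k ^ p)⁻¹)
        (fun i => (a1 i ^ (1 - p) * a2 i ^ p)⁻¹) (fun k => inv_pos.2 (pb k))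
        (fun k => inv_pos.2 (pa k)) H w
      simpa only [inv_inv] using this
    have e := aux_interp V V' hV _ (fun _ => c) _ (fun _ => 1) pa pb (fun _ => hc)
      (fun _ => one_pos) H' h3 (p := 1 - (s + t)) ⟨by linarith, by linarith⟩ z
    simp only [sub_sub_cancel, Real.one_rpow, mul_one, mul_inv, ex (hb1 _) (hb2 _)] at e
    have cp := Real.rpow_pos_of_pos hc (1 - (s + t))
    have e' := mul_le_mul_of_nonneg_left e cp.le
    refine le_trans (le_of_eq ?_) e'
    rw [Finset.mul_sum]
    refine Finset.sum_congr rfl fun i _ => ?_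
    rw [← mul_inv] 
    rw [← ex (ha1 i) (ha2 i)]
    field_simp

lemma aux_quad {a : ℕ} (U W K : Matrix (Fin a) (Fin a) ℂ) (f g : Fin a → ℝ) :
    (Kᴴ * (U * diagonal (fun i => (f i : ℂ)) * Uᴴ) * K * (W * diagonal (fun i => (g i : ℂ)) * Wᴴ)).trace.re
      = ∑ p : Fin a × Fin a, f p.1 * g p.2 * ‖(Uᴴ * K * W) p.1 p.2‖ ^ 2 := by
  set M := Uᴴ * K * W with hM
  have h1 : (Kᴴ * (U * diagonal (fun i => (f i : ℂ)) * Uᴴ) * K * (W * diagonal (fun i => (g i : ℂ)) * Wᴴ)).trace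
      = (Mᴴ * (diagonal (fun i => (f i : ℂ)) * M * diagonal (fun i => (g i : ℂ)))).trace := by
    rw [show Kᴴ * (U * diagonal (fun i => (f i : ℂ)) * Uᴴ) * K * (W * diagonal (fun i => (g i : ℂ)) * Wᴴ) =
      (Kᴴ * U * diagonal (fun i => (f i : ℂ)) * Uᴴ * K * W * diagonal (fun i => (g i : ℂ))) * Wᴴ by
        simp only [Matrix.mul_assoc], trace_mul_comm]
    simp only [hM, conjTranspose_mul, conjTranspose_conjTranspose, Matrix.mul_assoc]
  rw [h1, trace, Complex.re_sum, Fintype.sum_prod_type_right]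
  refine Finset.sum_congr rfl fun j _ => ?_
  rw [diag_apply, mul_apply, Complex.re_sum]
  refine Finset.sum_congr rfl fun i _ => ?_
  rw [mul_diagonal, diagonal_mul, conjTranspose_apply]
  have : star (M i j) * (f i * M i j * g j) = ((f i * g j * ‖M i j‖ ^ 2 : ℝ) : ℂ) := by
    push_cast
    rw [← Complex.conj_mul', Complex.star_def]
    ring
  rw [this, Complex.ofReal_re]

lemma aux_spec {a : ℕ} {A : Matrix (Fin a) (Fin a) ℂ} (hA : A.IsHermitian) :
    A = (hA.eigenvectorUnitary : Matrix (Fin a) (Fin a) ℂ) *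
      diagonal (fun i => ((hA.eigenvalues i : ℝ) : ℂ)) *
      (hA.eigenvectorUnitary : Matrix (Fin a) (Fin a) ℂ)ᴴ := by
  conv_lhs => rw [hA.spectral_theorem, Unitary.conjStarAlgAut_apply]
  rfl

lemma aux_one {a : ℕ} {A : Matrix (Fin a) (Fin a) ℂ} (hA : A.IsHermitian) :
    (hA.eigenvectorUnitary : Matrix (Fin a) (Fin a) ℂ) *
      (hA.eigenvectorUnitary : Matrix (Fin a) (Fin a) ℂ)ᴴ = 1 := by
  rw [← star_eq_conjTranspose]; exact Unitary.coe_mul_star_self _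

lemma aux_one' {a : ℕ} {A : Matrix (Fin a) (Fin a) ℂ} (hA : A.IsHermitian) :
    (hA.eigenvectorUnitary : Matrix (Fin a) (Fin a) ℂ)ᴴ *
      (hA.eigenvectorUnitary : Matrix (Fin a) (Fin a) ℂ) = 1 := by
  rw [← star_eq_conjTranspose]; exact Unitary.coe_star_mul_self _

lemma aux_tr {a : ℕ} {Z P : Matrix (Fin a) (Fin a) ℂ} (hZ : Z.IsHermitian) :
    (Z * P).trace.re = ∑ i, hZ.eigenvalues i * (((hZ.eigenvectorUnitary : Matrix (Fin a) (Fin a) ℂ)ᴴ * P *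
      (hZ.eigenvectorUnitary : Matrix (Fin a) (Fin a) ℂ)).diag i).re := by
  conv_lhs => rw [aux_spec hZ]
  rw [show ∀ U D : Matrix (Fin a) (Fin a) ℂ, U * D * Uᴴ * P = U * (D * (Uᴴ * P)) by
    intros; simp only [Matrix.mul_assoc], trace_mul_comm,
    show ∀ U D : Matrix (Fin a) (Fin a) ℂ, D * (Uᴴ * P) * U = D * (Uᴴ * P * U) by
    intros; simp only [Matrix.mul_assoc], trace, Complex.re_sum]
  refine Finset.sum_congr rfl fun j _ => ?_
  rw [diag_apply, diagonal_mul, Complex.re_ofReal_mul]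
  rfl

lemma aux_tr_nonneg {a : ℕ} {Z P : Matrix (Fin a) (Fin a) ℂ} (hZ : Z.PosSemidef) (hP : P.PosSemidef) :
    0 ≤ (Z * P).trace.re := by
  rw [aux_tr hZ.1]
  refine Finset.sum_nonneg fun i _ => mul_nonneg (hZ.eigenvalues_nonneg i) ?_
  exact (Complex.le_def.1 ((hP.conjTranspose_mul_mul_same _).diag_nonneg (i := i))).1

lemma aux_tr_pos {a : ℕ} {Z P : Matrix (Fin a) (Fin a) ℂ} (hZ : Z.PosDef) (hP : P.PosSemidef)
    (h0 : 0 < P.trace.re) : 0 < (Z * P).trace.re := by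
  rw [aux_tr hZ.1]
  have nn : ∀ i, 0 ≤ (((hZ.1.eigenvectorUnitary : Matrix (Fin a) (Fin a) ℂ)ᴴ * P *
      (hZ.1.eigenvectorUnitary : Matrix (Fin a) (Fin a) ℂ)).diag i).re := fun i =>
    (Complex.le_def.1 ((hP.conjTranspose_mul_mul_same _).diag_nonneg (i := i))).1
  have hs : ∑ i, (((hZ.1.eigenvectorUnitary : Matrix (Fin a) (Fin a) ℂ)ᴴ * P *
      (hZ.1.eigenvectorUnitary : Matrix (Fin a) (Fin a) ℂ)).diag i).re = P.trace.re := by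
    have : P.trace = ((hZ.1.eigenvectorUnitary : Matrix (Fin a) (Fin a) ℂ)ᴴ * P *
      (hZ.1.eigenvectorUnitary : Matrix (Fin a) (Fin a) ℂ)).trace := by
      rw [trace_mul_comm, ← Matrix.mul_assoc, aux_one, Matrix.one_mul]
    rw [this, trace, Complex.re_sum]
  rw [← hs] at h0
  obtain ⟨i, hi, hi'⟩ := Finset.exists_lt_of_sum_lt (s := Finset.univ) (f := fun _ : Fin a => (0:ℝ)) (by simpa using h0)
  exact Finset.sum_pos' (fun i _ => mul_nonneg (hZ.eigenvalues_pos i).le (nn i))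
    ⟨i, hi, mul_pos (hZ.eigenvalues_pos i) hi'⟩

lemma aux_herm {a b : ℕ} {Φ : Matrix (Fin a) (Fin a) ℂ →ₗ[ℂ] Matrix (Fin b) (Fin b) ℂ}
    (hΦ : IsPositiveMap Φ) (K : Matrix (Fin a) (Fin a) ℂ) : Φ Kᴴ = (Φ K)ᴴ := by
  have h1 : ∀ K, (Φ (Kᴴ * K))ᴴ = Φ (Kᴴ * K) := fun K =>
    (hΦ _ (posSemidef_conjTranspose_mul_self K)).1
  have h2 : ∀ K, (Φ K)ᴴ + (Φ Kᴴ)ᴴ = Φ K + Φ Kᴴ := by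
    intro K
    have e := h1 (K + 1)
    have e1 := h1 K
    have e2 := h1 1
    simp only [conjTranspose_add, conjTranspose_one, Matrix.mul_add, Matrix.add_mul, map_add,
      Matrix.mul_one, Matrix.one_mul] at e e2
    rw [e1, e2] at e
    have := congrArg (fun Z => Z - Φ (Kᴴ * K) - Φ 1) e
    convert this using 1 <;> abel
  have e := h2 K
  have e' := h2 (Complex.I • K)
  simp only [conjTranspose_smul, map_smul, Complex.star_def, Complex.conj_I, map_neg, neg_neg] at e'
  have e'' := congrArg (fun Z => Complex.I • Z) e'
  simp only [smul_add, smul_smul, Complex.I_mul_I, one_smul, neg_smul, smul_neg, neg_neg] at e''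
  have h : (2:ℂ) • Φ Kᴴ = (2:ℂ) • (Φ K)ᴴ := by
    have := congrArg₂ (· + ·) e e''
    rw [two_smul, two_smul]
    calc _ = (Φ K + Φ Kᴴ + (-Φ K + Φ Kᴴ)) := by abel
      _ = _ := this.symm
      _ = _ := by abel
  exact smul_right_injective _ (two_ne_zero) h

lemma aux_pos {a b : ℕ} {Φ : Matrix (Fin a) (Fin a) ℂ →ₗ[ℂ] Matrix (Fin b) (Fin b) ℂ}
    (hΦ : IsSchwarz Φ) : IsPositiveMap Φ := by
  have key : ∀ K, (Φ (Kᴴ * K)).PosSemidef := fun K => by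
    have := (hΦ K).add (posSemidef_conjTranspose_mul_self (Φ K))
    simpa using this
  intro X hX
  have hs := aux_spec hX.1
  set U := (hX.1.eigenvectorUnitary : Matrix (Fin a) (Fin a) ℂ)
  set D : Matrix (Fin a) (Fin a) ℂ := diagonal (fun i => ((Real.sqrt (hX.1.eigenvalues i) : ℝ) : ℂ))
  have hD : Dᴴ * D = diagonal (fun i => ((hX.1.eigenvalues i : ℝ) : ℂ)) := by
    simp only [D, diagonal_conjTranspose, diagonal_mul_diagonal]
    congr 1
    funext i
    simp only [Pi.star_apply, Complex.star_def, Complex.conj_ofReal, ← Complex.ofReal_mul,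
      Real.mul_self_sqrt (hX.eigenvalues_nonneg i)]
  rw [hs, ← hD, show U * (Dᴴ * D) * Uᴴ = (D * Uᴴ)ᴴ * (D * Uᴴ) by
    simp only [conjTranspose_mul, conjTranspose_conjTranspose, Matrix.mul_assoc]]
  exact key _

lemma aux_adj_herm {a b : ℕ} {Φ : Matrix (Fin a) (Fin a) ℂ →ₗ[ℂ] Matrix (Fin b) (Fin b) ℂ}
    {Ψ : Matrix (Fin b) (Fin b) ℂ →ₗ[ℂ] Matrix (Fin a) (Fin a) ℂ}
    (hΦ : IsPositiveMap Φ) (hadj : IsHSAdjoint Φ Ψ) (K) : Ψ Kᴴ = (Ψ K)ᴴ := by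
  have : ∀ Y, ((Ψ Kᴴ)ᴴ * Y).trace = (Ψ K * Y).trace := by
    intro Y
    rw [← hadj, conjTranspose_conjTranspose]
    have e := hadj K Yᴴ
    rw [aux_herm hΦ, ← conjTranspose_mul, ← conjTranspose_mul, trace_conjTranspose,
      trace_conjTranspose] at e
    have e := star_injective e
    rw [trace_mul_comm, e, trace_mul_comm]
  have h2 := Matrix.ext_iff_trace_mul_right.2 this
  rw [← h2, conjTranspose_conjTranspose]

lemma aux_adj_posDef {a b : ℕ} {Φ : Matrix (Fin a) (Fin a) ℂ →ₗ[ℂ] Matrix (Fin b) (Fin b) ℂ}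
    {Ψ : Matrix (Fin b) (Fin b) ℂ →ₗ[ℂ] Matrix (Fin a) (Fin a) ℂ}
    (hΦ : IsPositiveMap Φ) (hadj : IsHSAdjoint Φ Ψ) (h1 : (Ψ 1).PosDef)
    {Y : Matrix (Fin b) (Fin b) ℂ} (hY : Y.PosDef) : (Ψ Y).PosDef := by
  have hH : (Ψ Y).IsHermitian := by
    rw [IsHermitian, ← aux_adj_herm hΦ hadj, hY.1]
  rw [hH.posDef_iff_eigenvalues_pos]
  intro i
  rw [hH.eigenvalues_eq]
  set v : Fin a → ℂ := ⇑(hH.eigenvectorBasis i) with hv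
  have hv0 : v ≠ 0 := by
    intro h
    exact hH.eigenvectorBasis.orthonormal.ne_zero i ((WithLp.ofLp_eq_zero 2).1 h)
  set P := vecMulVec v (star v)
  have hP : P.PosSemidef := posSemidef_vecMulVec_self_star v
  have e : ∀ A : Matrix (Fin a) (Fin a) ℂ, (A * P).trace = star v ⬝ᵥ (A *ᵥ v) := by
    intro A
    rw [mul_vecMulVec, trace_vecMulVec, dotProduct_comm]
  have e2 : ∀ Z : Matrix (Fin b) (Fin b) ℂ, Z.IsHermitian → (Z * Φ P).trace = (Ψ Z * P).trace := by
    intro Z hZ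
    have := hadj Z P
    rwa [← aux_adj_herm hΦ hadj, hZ] at this
  rw [← e, ← e2 Y hY.1]
  refine aux_tr_pos hY (hΦ P hP) ?_
  have := e2 1 isHermitian_one
  rw [Matrix.one_mul] at this
  rw [this, e]
  exact h1.re_dotProduct_pos hv0

lemma aux_schw {a b : ℕ} {Φ : Matrix (Fin a) (Fin a) ℂ →ₗ[ℂ] Matrix (Fin b) (Fin b) ℂ}
    {Ψ : Matrix (Fin b) (Fin b) ℂ →ₗ[ℂ] Matrix (Fin a) (Fin a) ℂ}
    (hΦ : IsSchwarz Φ) (hadj : IsHSAdjoint Φ Ψ) {Z : Matrix (Fin b) (Fin b) ℂ} (hZ : Z.PosSemidef)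
    (K) : (Z * ((Φ K)ᴴ * Φ K)).trace.re ≤ (Ψ Z * (Kᴴ * K)).trace.re := by
  have h := aux_tr_nonneg hZ (hΦ K)
  have e := hadj Z (Kᴴ * K)
  rw [← aux_adj_herm (aux_pos hΦ) hadj, hZ.1] at e
  rw [Matrix.mul_sub, trace_sub, e, Complex.sub_re] at h
  linarith

lemma aux_inner {a : ℕ} (A B : Matrix (Fin a) (Fin a) ℂ) :
    ∑ p : Fin a × Fin a, star (A p.1 p.2) * B p.1 p.2 = (Aᴴ * B).trace := by
  rw [Fintype.sum_prod_type_right, trace]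
  refine Finset.sum_congr rfl fun j _ => ?_
  rw [diag_apply, mul_apply]
  rfl

lemma aux_mpow {a : ℕ} {A : Matrix (Fin a) (Fin a) ℂ} (hA : A.IsHermitian) (p : ℝ) :
    mpow A p = (hA.eigenvectorUnitary : Matrix (Fin a) (Fin a) ℂ) *
      Matrix.diagonal (fun i => ((hA.eigenvalues i ^ p : ℝ) : ℂ)) *
      (hA.eigenvectorUnitary : Matrix (Fin a) (Fin a) ℂ)ᴴ := by
  rw [mpow, dif_pos hA]

lemma aux_quadL {a : ℕ} {A B : Matrix (Fin a) (Fin a) ℂ} (hA : A.IsHermitian) (hB : B.IsHermitian)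
    (K : Matrix (Fin a) (Fin a) ℂ) :
    ∑ p : Fin a × Fin a, hA.eigenvalues p.1 * ‖((hA.eigenvectorUnitary : Matrix (Fin a) (Fin a) ℂ)ᴴ * K *
      (hB.eigenvectorUnitary : Matrix (Fin a) (Fin a) ℂ)) p.1 p.2‖ ^ 2 = (A * (Kᴴᴴ * Kᴴ)).trace.re := by
  have := aux_quad (hA.eigenvectorUnitary : Matrix (Fin a) (Fin a) ℂ)
    (hB.eigenvectorUnitary : Matrix (Fin a) (Fin a) ℂ) K hA.eigenvalues (fun _ => 1)
  rw [← aux_spec hA] at this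
  simp only [Complex.ofReal_one, diagonal_one, Matrix.mul_one, aux_one, mul_one] at this
  rw [← this, conjTranspose_conjTranspose, Matrix.mul_assoc, trace_mul_comm, Matrix.mul_assoc]

lemma aux_quadR {a : ℕ} {A B : Matrix (Fin a) (Fin a) ℂ} (hA : A.IsHermitian) (hB : B.IsHermitian)
    (K : Matrix (Fin a) (Fin a) ℂ) :
    ∑ p : Fin a × Fin a, hB.eigenvalues p.2 * ‖((hA.eigenvectorUnitary : Matrix (Fin a) (Fin a) ℂ)ᴴ * K *
      (hB.eigenvectorUnitary : Matrix (Fin a) (Fin a) ℂ)) p.1 p.2‖ ^ 2 = (B * (Kᴴ * K)).trace.re := by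
  have := aux_quad (hA.eigenvectorUnitary : Matrix (Fin a) (Fin a) ℂ)
    (hB.eigenvectorUnitary : Matrix (Fin a) (Fin a) ℂ) K (fun _ => 1) hB.eigenvalues
  rw [← aux_spec hB] at this
  simp only [Complex.ofReal_one, diagonal_one, Matrix.mul_one, aux_one, one_mul] at this
  rw [← this, trace_mul_comm]

lemma aux_quad1 {a : ℕ} {A B : Matrix (Fin a) (Fin a) ℂ} (hA : A.IsHermitian) (hB : B.IsHermitian)
    (K : Matrix (Fin a) (Fin a) ℂ) (c : ℝ) :
    ∑ p : Fin a × Fin a, c * ‖((hA.eigenvectorUnitary : Matrix (Fin a) (Fin a) ℂ)ᴴ * K *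
      (hB.eigenvectorUnitary : Matrix (Fin a) (Fin a) ℂ)) p.1 p.2‖ ^ 2 =
        (((c : ℂ) • (1 : Matrix (Fin a) (Fin a) ℂ)) * (Kᴴ * K)).trace.re := by
  have := aux_quad (hA.eigenvectorUnitary : Matrix (Fin a) (Fin a) ℂ)
    (hB.eigenvectorUnitary : Matrix (Fin a) (Fin a) ℂ) K (fun _ => 1) (fun _ => 1)
  simp only [Complex.ofReal_one, diagonal_one, Matrix.mul_one, aux_one, one_mul] at this
  rw [← Finset.mul_sum, ← this, smul_mul, Matrix.one_mul, trace_smul, smul_eq_mul,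
    Complex.re_ofReal_mul]

theorem stmt16 {m n : ℕ} (hm : 0 < m) (s t : ℝ) (hs : 0 < s) (ht : 0 < t) (hst : s + t ≤ 1)
    (Φ : Matrix (Fin m) (Fin m) ℂ →ₗ[ℂ] Matrix (Fin n) (Fin n) ℂ)
    (Ψ : Matrix (Fin n) (Fin n) ℂ →ₗ[ℂ] Matrix (Fin m) (Fin m) ℂ)
    (hΦ : IsSchwarz Φ) (hadj : IsHSAdjoint Φ Ψ)
    (hsemi : Ψ 1 = (((n : ℝ) / m : ℝ) : ℂ) • 1) (hΨ1 : (Ψ 1).PosDef)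
    (X Y : Matrix (Fin n) (Fin n) ℂ) (hX : X.PosDef) (hY : Y.PosDef)
    (K : Matrix (Fin n) (Fin n) ℂ) :
    (Ψ Kᴴ * mpow (Ψ Y) (-s) * Ψ K * mpow (Ψ X) (-t)).trace.re ≤
      ((n : ℝ) / m) ^ (1 - (s + t)) * (Kᴴ * mpow Y (-s) * K * mpow X (-t)).trace.re := by
  have hpos := aux_pos hΦ
  have hX' := aux_adj_posDef hpos hadj hΨ1 hX
  have hY' := aux_adj_posDef hpos hadj hΨ1 hY
  have hc : 0 < (n : ℝ) / m := by
    have := hΨ1.diag_pos (i := ⟨0, hm⟩)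
    rw [hsemi] at this
    simp only [Matrix.smul_apply, one_apply_eq, smul_eq_mul, mul_one] at this
    exact_mod_cast this
  rw [aux_adj_herm hpos hadj, aux_mpow hX'.1, aux_mpow hY'.1, aux_mpow hX.1, aux_mpow hY.1,
    aux_quad, aux_quad]
  have u1 := aux_one hX.1
  have u2 := aux_one hY.1
  have u3 := aux_one' hX'.1
  have u4 := aux_one' hY'.1
  have qL := aux_quadL hY.1 hX.1
  have qL' := aux_quadL hY'.1 hX'.1
  have qR := aux_quadR hY.1 hX.1
  have qR' := aux_quadR hY'.1 hX'.1
  have q1 := aux_quad1 hY.1 hX.1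
  have q1' := aux_quad1 hY'.1 hX'.1
  generalize (hX.1.eigenvectorUnitary : Matrix (Fin n) (Fin n) ℂ) = Ux at *
  generalize (hY.1.eigenvectorUnitary : Matrix (Fin n) (Fin n) ℂ) = Uy at *
  generalize (hX'.1.eigenvectorUnitary : Matrix (Fin m) (Fin m) ℂ) = Ux' at *
  generalize (hY'.1.eigenvectorUnitary : Matrix (Fin m) (Fin m) ℂ) = Uy' at *
  let L : (Fin m × Fin m → ℂ) → Matrix (Fin m) (Fin m) ℂ :=
    fun w => Uy' * (of fun i j => w (i, j)) * Ux'ᴴ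
  let R : (Fin n × Fin n → ℂ) → Matrix (Fin n) (Fin n) ℂ :=
    fun z => Uy * (of fun i j => z (i, j)) * Uxᴴ
  let V : (Fin m × Fin m → ℂ) → (Fin n × Fin n → ℂ) := fun w p => (Uyᴴ * Φ (L w) * Ux) p.1 p.2
  let V' : (Fin n × Fin n → ℂ) → (Fin m × Fin m → ℂ) := fun z p => (Uy'ᴴ * Ψ (R z) * Ux') p.1 p.2
  have hL : ∀ w, Uy'ᴴ * L w * Ux' = of fun i j => w (i, j) := by
    intro w
    simp only [L]
    rw [show ∀ M, Uy'ᴴ * (Uy' * M * Ux'ᴴ) * Ux' = (Uy'ᴴ * Uy') * M * (Ux'ᴴ * Ux') by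
      intros; simp only [Matrix.mul_assoc], u3, u4, Matrix.one_mul, Matrix.mul_one]
  have hLp : ∀ w (p : Fin m × Fin m), w p = (Uy'ᴴ * L w * Ux') p.1 p.2 := by
    intro w p; rw [hL]; rfl
  have hV : ∀ w z, ∑ k, star (z k) * V w k = ∑ i, star (V' z i) * w i := by
    intro w z
    have e1 := aux_inner (of fun i j => z (i, j)) (Uyᴴ * Φ (L w) * Ux)
    have e2 := aux_inner (Uy'ᴴ * Ψ (R z) * Ux') (of fun i j => w (i, j))
    refine (e1.trans ?_).trans e2.symm
    have e3 := hadj (R z) (L w)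
    simp only [L, R, conjTranspose_mul, conjTranspose_conjTranspose, Matrix.mul_assoc] at e3 ⊢
    rw [trace_mul_comm] at e3
    rw [trace_mul_comm Ux'ᴴ]
    simpa only [Matrix.mul_assoc] using e3
  have h1 : ∀ w, ∑ k, hY.1.eigenvalues k.1 * ‖V w k‖ ^ 2 ≤ ∑ i, hY'.1.eigenvalues i.1 * ‖w i‖ ^ 2 := by
    intro w
    simp only [hLp w]
    rw [qL', qL, ← aux_herm hpos]
    exact aux_schw hΦ hadj hY.posSemidef _
  have h2 : ∀ w, ∑ k, hX.1.eigenvalues k.2 * ‖V w k‖ ^ 2 ≤ ∑ i, hX'.1.eigenvalues i.2 * ‖w i‖ ^ 2 := by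
    intro w
    simp only [hLp w]
    rw [qR', qR]
    exact aux_schw hΦ hadj hX.posSemidef _
  have h3 : ∀ w, ∑ k, 1 * ‖V w k‖ ^ 2 ≤ ∑ i, ((n : ℝ) / m) * ‖w i‖ ^ 2 := by
    intro w
    simp only [hLp w]
    rw [q1', q1, ← hsemi, Complex.ofReal_one, one_smul]
    exact aux_schw hΦ hadj PosSemidef.one _
  have fin := aux_interp3 V V' hV (fun p => hY'.1.eigenvalues p.1) (fun p => hX'.1.eigenvalues p.2)
    (fun p => hY.1.eigenvalues p.1) (fun p => hX.1.eigenvalues p.2)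
    (fun p => hY'.eigenvalues_pos _) (fun p => hY.eigenvalues_pos _)
    (fun p => hX'.eigenvalues_pos _) (fun p => hX.eigenvalues_pos _) _ hc h1 h2 h3 hs ht hst
    (fun p => (Uyᴴ * K * Ux) p.1 p.2)
  have hR : R (fun p => (Uyᴴ * K * Ux) p.1 p.2) = K := by
    have : (of fun i j => (Uyᴴ * K * Ux) i j) = Uyᴴ * K * Ux := rfl
    simp only [R]
    rw [this, show Uy * (Uyᴴ * K * Ux) * Uxᴴ = (Uy * Uyᴴ) * K * (Ux * Uxᴴ) by
      simp only [Matrix.mul_assoc], u1, u2, Matrix.one_mul, Matrix.mul_one]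
  simp only [V', hR] at fin
  exact fin
end

section
/- Let 0 ≤ s < 1 and 1/(2-s) ≤ q < 1, and let Φ : M_m(ℂ) → M_n(ℂ) be a sesquiunital Schwarz map. Then for all positive definite A ∈ M_n(ℂ) and all invertible B ∈ M_n(ℂ): (n/m)^{(2-s)q - 1} tr[(B* A^{-s} B)^q] ≥ tr[(Φ†(B)* Φ†(A)^{-s} Φ†(B))^q]. -/
open Matrix
open scoped ComplexOrder

/-- bilinear interpolation -/
lemma interp_aux {ι κ : Type} [Fintype ι] [Fintype κ] (M : ι → κ → ℂ)
    (x0 x1 : ι → ℝ) (y0 y1 : κ → ℝ) (hx0 : ∀ i, 0 < x0 i) (hx1 : ∀ i, 0 < x1 i)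
    (hy0 : ∀ i, 0 < y0 i) (hy1 : ∀ i, 0 < y1 i)
    (h0 : ∀ (w : ι → ℂ) (v : κ → ℂ), ‖∑ i, ∑ k, w i * M i k * v k‖ ^ 2 ≤
      (∑ i, x0 i * ‖w i‖ ^ 2) * (∑ k, y0 k * ‖v k‖ ^ 2))
    (h1 : ∀ (w : ι → ℂ) (v : κ → ℂ), ‖∑ i, ∑ k, w i * M i k * v k‖ ^ 2 ≤
      (∑ i, x1 i * ‖w i‖ ^ 2) * (∑ k, y1 k * ‖v k‖ ^ 2))
    (t : ℝ) (ht0 : 0 ≤ t) (ht1 : t ≤ 1) (w : ι → ℂ) (v : κ → ℂ) :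
    ‖∑ i, ∑ k, w i * M i k * v k‖ ^ 2 ≤
      (∑ i, (x0 i ^ (1 - t) * x1 i ^ t) * ‖w i‖ ^ 2) *
      (∑ k, (y0 k ^ (1 - t) * y1 k ^ t) * ‖v k‖ ^ 2) := by
  set R := (∑ i, (x0 i ^ (1 - t) * x1 i ^ t) * ‖w i‖ ^ 2) *
      (∑ k, (y0 k ^ (1 - t) * y1 k ^ t) * ‖v k‖ ^ 2) with hR
  have hRnn : 0 ≤ R := by
    apply mul_nonneg <;> apply Finset.sum_nonneg <;> intro i _
    · have := hx0 i; have := hx1 i; positivity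
    · have := hy0 i; have := hy1 i; positivity
  let g (L : ℝ) (z : ℂ) : ℂ := Complex.exp (((t : ℂ) - z) / 2 * (L : ℂ))
  have gnorm : ∀ L z, ‖g L z‖ = Real.exp ((t - z.re) / 2 * L) := by
    intro L z
    simp only [g, Complex.norm_exp]
    congr 1
    simp [Complex.mul_re]
  have gsq : ∀ L z, ‖g L z‖ ^ 2 = Real.exp ((t - z.re) * L) := by
    intro L z
    rw [gnorm, ← Real.exp_nat_mul]; congr 1; push_cast; ring
  let Lx (i : ι) := Real.log (x1 i) - Real.log (x0 i)
  let Ly (i : κ) := Real.log (y1 i) - Real.log (y0 i)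
  let f (z : ℂ) : ℂ := ∑ i, ∑ k, (w i * g (Lx i) z) * M i k * (v k * g (Ly k) z)
  have e0 : ∀ a b : ℝ, 0 < a → 0 < b →
      a * Real.exp (t * (Real.log b - Real.log a)) = a ^ (1 - t) * b ^ t := by
    intro a b ha hb
    rw [Real.rpow_def_of_pos ha, Real.rpow_def_of_pos hb, ← Real.exp_add]
    nth_rewrite 1 [← Real.exp_log ha]
    rw [← Real.exp_add]; congr 1; ring
  have e1 : ∀ a b : ℝ, 0 < a → 0 < b →
      b * Real.exp ((t - 1) * (Real.log b - Real.log a)) = a ^ (1 - t) * b ^ t := by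
    intro a b ha hb
    rw [Real.rpow_def_of_pos ha, Real.rpow_def_of_pos hb, ← Real.exp_add]
    nth_rewrite 1 [← Real.exp_log hb]
    rw [← Real.exp_add]; congr 1; ring
  have b0 : ∀ z : ℂ, z.re = 0 → ‖f z‖ ≤ Real.sqrt R := by
    intro z hz
    apply Real.le_sqrt_of_sq_le
    refine (h0 _ _).trans (le_of_eq ?_)
    rw [hR]
    congr 1 <;> refine Finset.sum_congr rfl fun i _ => ?_
    · rw [norm_mul, mul_pow, gsq, hz, sub_zero, ← e0 _ _ (hx0 i) (hx1 i)]; ring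
    · rw [norm_mul, mul_pow, gsq, hz, sub_zero, ← e0 _ _ (hy0 i) (hy1 i)]; ring
  have b1 : ∀ z : ℂ, z.re = 1 → ‖f z‖ ≤ Real.sqrt R := by
    intro z hz
    apply Real.le_sqrt_of_sq_le
    refine (h1 _ _).trans (le_of_eq ?_)
    rw [hR]
    congr 1 <;> refine Finset.sum_congr rfl fun i _ => ?_
    · rw [norm_mul, mul_pow, gsq, hz, ← e1 _ _ (hx0 i) (hx1 i)]; ring
    · rw [norm_mul, mul_pow, gsq, hz, ← e1 _ _ (hy0 i) (hy1 i)]; ring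
  have hd : Differentiable ℂ f := by
    simp only [f, g]
    fun_prop
  have gb : ∀ L : ℝ, ∀ z : ℂ, z ∈ Complex.HadamardThreeLines.verticalClosedStrip 0 1 →
      ‖g L z‖ ≤ Real.exp |L| := by
    intro L z hz
    have hz' : 0 ≤ z.re ∧ z.re ≤ 1 := by
      simpa [Complex.HadamardThreeLines.verticalClosedStrip] using hz
    rw [gnorm, Real.exp_le_exp]
    refine (le_abs_self _).trans ?_
    rw [abs_mul]
    have : |(t - z.re) / 2| ≤ 1 := by
      rw [abs_le]; constructor <;> linarith [hz'.1, hz'.2]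
    nlinarith [abs_nonneg L]
  have hB : BddAbove ((norm ∘ f) '' Complex.HadamardThreeLines.verticalClosedStrip 0 1) := by
    refine ⟨∑ i, ∑ k, (‖w i‖ * Real.exp |Lx i|) * ‖M i k‖ * (‖v k‖ * Real.exp |Ly k|), ?_⟩
    rintro _ ⟨z, hz, rfl⟩
    simp only [Function.comp, f]
    refine (norm_sum_le _ _).trans (Finset.sum_le_sum fun i _ => ?_)
    refine (norm_sum_le _ _).trans (Finset.sum_le_sum fun k _ => ?_)
    rw [norm_mul, norm_mul, norm_mul, norm_mul]
    have := gb (Lx i) z hz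
    have := gb (Ly k) z hz
    gcongr
  have key := Complex.HadamardThreeLines.norm_le_interp_of_mem_verticalClosedStrip' (f := f)
    (z := (t : ℂ)) (a := Real.sqrt R) (b := Real.sqrt R) (l := 0) (u := 1) one_pos
    (by simp [Complex.HadamardThreeLines.verticalClosedStrip, ht0, ht1])
    hd.diffContOnCl hB (fun z hz => b0 z (by simpa using hz)) (fun z hz => b1 z (by simpa using hz))
  have ft : f t = ∑ i, ∑ k, w i * M i k * v k := by
    simp [f, g]
  rw [ft] at key
  have hk : ‖∑ i, ∑ k, w i * M i k * v k‖ ≤ Real.sqrt R := by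
    refine key.trans (le_of_eq ?_)
    rcases (Real.sqrt_nonneg R).eq_or_lt with h | h
    · rw [← h]
      by_cases h' : t = 0
      · simp [h']
      · simp [Real.zero_rpow h']
    · rw [← Real.rpow_add h]; simp
  calc _ ≤ (Real.sqrt R) ^ 2 := by gcongr
    _ = R := Real.sq_sqrt hRnn

/-- spectral synthesis -/
noncomputable def sp {k : ℕ} (U : Matrix (Fin k) (Fin k) ℂ) (a : Fin k → ℝ) :
    Matrix (Fin k) (Fin k) ℂ := U * Matrix.diagonal (fun i => ((a i : ℝ) : ℂ)) * Uᴴ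

lemma hsum {k : ℕ} (U V Y : Matrix (Fin k) (Fin k) ℂ) (a z : Fin k → ℝ) :
    (Yᴴ * sp U a * Y * sp V z).trace =
      ((∑ i, ∑ j, a i * z j * ‖(Uᴴ * Y * V) i j‖ ^ 2 : ℝ) : ℂ) := by
  have h1 : (Yᴴ * sp U a * Y * sp V z).trace = ((Uᴴ * Y * V)ᴴ *
      Matrix.diagonal (fun i => ((a i : ℝ) : ℂ)) * (Uᴴ * Y * V) *
      Matrix.diagonal (fun i => ((z i : ℝ) : ℂ))).trace := by
    unfold sp
    simp only [← Matrix.mul_assoc]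
    rw [Matrix.trace_mul_comm]
    simp only [conjTranspose_mul, conjTranspose_conjTranspose, Matrix.mul_assoc]
  rw [h1]
  set y := Uᴴ * Y * V
  simp only [Matrix.trace, Matrix.diag, Matrix.mul_diagonal, Matrix.mul_apply, Matrix.diagonal_apply]
  simp
  simp only [Finset.sum_mul]
  rw [Finset.sum_comm]
  refine Finset.sum_congr rfl fun i _ => Finset.sum_congr rfl fun j _ => ?_
  rw [← Complex.conj_mul']
  ring

lemma sp_one {k : ℕ} {U : Matrix (Fin k) (Fin k) ℂ} (hU : U * Uᴴ = 1) : sp U (fun _ => 1) = 1 := by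
  simp [sp, hU]

lemma sp_trace {k : ℕ} {U : Matrix (Fin k) (Fin k) ℂ} (hU : Uᴴ * U = 1) (a : Fin k → ℝ) :
    (sp U a).trace = ((∑ i, a i : ℝ) : ℂ) := by
  rw [sp, Matrix.trace_mul_cycle, hU]
  simp [Matrix.trace]

lemma sp_mul {k : ℕ} {U : Matrix (Fin k) (Fin k) ℂ} (hU : Uᴴ * U = 1) (a b : Fin k → ℝ) :
    sp U a * sp U b = sp U (fun i => a i * b i) := by
  have : sp U a * sp U b = U * Matrix.diagonal (fun i => ((a i : ℝ) : ℂ)) * (Uᴴ * U) *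
     Matrix.diagonal (fun i => ((b i : ℝ) : ℂ)) * Uᴴ := by simp only [sp, Matrix.mul_assoc]
  rw [this, hU, sp]
  simp [Matrix.mul_assoc, ← Matrix.mul_assoc (Matrix.diagonal _) (Matrix.diagonal _)]

lemma sp_posSemidef {k : ℕ} (U : Matrix (Fin k) (Fin k) ℂ) (a : Fin k → ℝ) (ha : ∀ i, 0 ≤ a i) :
    (sp U a).PosSemidef := by
  refine PosSemidef.mul_mul_conjTranspose_same (PosSemidef.diagonal ?_) U
  intro i
  simpa using ha i

lemma sp_posDef {k : ℕ} {U : Matrix (Fin k) (Fin k) ℂ} (hU : Uᴴ * U = 1) (a : Fin k → ℝ)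
    (ha : ∀ i, 0 < a i) : (sp U a).PosDef := by
  have hU' : U * Uᴴ = 1 := mul_eq_one_comm.mp hU
  refine PosDef.mul_mul_conjTranspose_same (PosDef.diagonal ?_) ?_
  · intro i
    simpa using ha i
  · intro x y h
    have := congrArg (fun v => v ᵥ* Uᴴ) h
    simpa [hU', Matrix.vecMul_vecMul] using this

lemma herm_sp {k : ℕ} {A : Matrix (Fin k) (Fin k) ℂ} (hA : A.IsHermitian) :
    A = sp (hA.eigenvectorUnitary : Matrix (Fin k) (Fin k) ℂ) hA.eigenvalues := by
  conv_lhs => rw [hA.spectral_theorem, Unitary.conjStarAlgAut_apply]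
  rfl

lemma mpow_sp {k : ℕ} {A : Matrix (Fin k) (Fin k) ℂ} (hA : A.IsHermitian) (p : ℝ) :
    mpow A p = sp (hA.eigenvectorUnitary : Matrix (Fin k) (Fin k) ℂ)
      (fun i => hA.eigenvalues i ^ p) := by
  simp only [mpow, dif_pos hA, sp]

lemma eU {k : ℕ} {A : Matrix (Fin k) (Fin k) ℂ} (hA : A.IsHermitian) :
    (hA.eigenvectorUnitary : Matrix (Fin k) (Fin k) ℂ)ᴴ * hA.eigenvectorUnitary = 1 := by
  have := Unitary.coe_star_mul_self hA.eigenvectorUnitary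
  simpa [star_eq_conjTranspose] using this

/-- variational upper bound -/
lemma young_trace {k : ℕ} {U V : Matrix (Fin k) (Fin k) ℂ} (hU : Uᴴ * U = 1) (hV : Vᴴ * V = 1)
    (x y : Fin k → ℝ) (hx : ∀ i, 0 ≤ x i) (hy : ∀ i, 0 < y i) (q r : ℝ) (hq0 : 0 < q) (hq1 : q < 1)
    (hr : r * q = 1 - q) :
    ∑ i, x i ^ q ≤ q * (sp U x * sp V (fun j => y j ^ (-r))).trace.re + (1 - q) * ∑ j, y j := by
  have hU' : U * Uᴴ = 1 := mul_eq_one_comm.mp hU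
  have hV' : V * Vᴴ = 1 := mul_eq_one_comm.mp hV
  have T : ∀ a z : Fin k → ℝ, (sp U a * sp V z).trace.re =
      ∑ i, ∑ j, a i * z j * ‖(Uᴴ * V) i j‖ ^ 2 := by
    intro a z
    have := hsum U V 1 a z
    simp only [conjTranspose_one, Matrix.one_mul, Matrix.mul_one] at this
    rw [this, Complex.ofReal_re]
  have h1 : ∑ i, x i ^ q = ∑ i, ∑ j, x i ^ q * 1 * ‖(Uᴴ * V) i j‖ ^ 2 := by
    rw [← T (fun i => x i ^ q) (fun _ => 1), sp_one hV', Matrix.mul_one, sp_trace hU,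
      Complex.ofReal_re]
  have h2 : ∑ j, y j = ∑ i, ∑ j, 1 * y j * ‖(Uᴴ * V) i j‖ ^ 2 := by
    rw [← T (fun _ => 1) y, sp_one hU', Matrix.one_mul, sp_trace hV, Complex.ofReal_re]
  rw [h1, h2, T, Finset.mul_sum, Finset.mul_sum, ← Finset.sum_add_distrib]
  refine Finset.sum_le_sum fun i _ => ?_
  rw [Finset.mul_sum, Finset.mul_sum, ← Finset.sum_add_distrib]
  refine Finset.sum_le_sum fun j _ => ?_
  have yy := Real.geom_mean_le_arith_mean2_weighted hq0.le (by linarith : 0 ≤ 1 - q)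
    (mul_nonneg (hx i) (Real.rpow_nonneg (hy j).le (-r))) (hy j).le (by ring)
  rw [Real.mul_rpow (hx i) (Real.rpow_nonneg (hy j).le (-r)), ← Real.rpow_mul (hy j).le, mul_assoc,
    ← Real.rpow_add (hy j), show -r * q + (1 - q) = 0 by linarith, Real.rpow_zero] at yy
  have := mul_le_mul_of_nonneg_right yy (sq_nonneg ‖(Uᴴ * V) i j‖)
  linarith

lemma trace_mul_nonneg' {k : ℕ} {X Y : Matrix (Fin k) (Fin k) ℂ} (hX : X.PosSemidef)
    (hY : Y.PosSemidef) : 0 ≤ (X * Y).trace := by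
  have h := herm_sp hX.1
  set U := (hX.1.eigenvectorUnitary : Matrix (Fin k) (Fin k) ℂ)
  have h2 := herm_sp hY.1
  set V := (hY.1.eigenvectorUnitary : Matrix (Fin k) (Fin k) ℂ)
  have h3 := hsum U V 1 hX.1.eigenvalues hY.1.eigenvalues
  simp only [conjTranspose_one, Matrix.one_mul, Matrix.mul_one] at h3
  rw [← h, ← h2] at h3
  rw [h3]
  have : 0 ≤ ∑ i, ∑ j, hX.1.eigenvalues i * hY.1.eigenvalues j * ‖(Uᴴ * V) i j‖ ^ 2 := by
    refine Finset.sum_nonneg fun i _ => Finset.sum_nonneg fun j _ => ?_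
    have := hX.eigenvalues_nonneg i
    have := hY.eigenvalues_nonneg j
    positivity
  exact_mod_cast this

section maps

variable {m n : ℕ} {Φ : Matrix (Fin m) (Fin m) ℂ →ₗ[ℂ] Matrix (Fin n) (Fin n) ℂ}
  {Ψ : Matrix (Fin n) (Fin n) ℂ →ₗ[ℂ] Matrix (Fin m) (Fin m) ℂ}

lemma phi_sq (hΦ : IsSchwarz Φ) (K : Matrix (Fin m) (Fin m) ℂ) : (Φ (Kᴴ * K)).PosSemidef := by
  have := (hΦ K).add (posSemidef_conjTranspose_mul_self (Φ K))
  simpa using this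

lemma phi_star (hΦ : IsSchwarz Φ) (hunital : Φ 1 = 1) (K : Matrix (Fin m) (Fin m) ℂ) :
    Φ Kᴴ = (Φ K)ᴴ := by
  have h0 := (phi_sq hΦ K).1.eq
  have h1 := (phi_sq hΦ (1 + K)).1.eq
  have h2 := (phi_sq hΦ (1 + Complex.I • K)).1.eq
  simp only [conjTranspose_add, conjTranspose_one, conjTranspose_smul, Matrix.add_mul,
    Matrix.mul_add, Matrix.one_mul, Matrix.mul_one, map_add, hunital, Matrix.smul_mul,
    Matrix.mul_smul, map_smul, h0] at h1 h2
  ext i j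
  have e1 := congrFun (congrFun h1 i) j
  have e2 := congrFun (congrFun h2 i) j
  simp [Matrix.add_apply] at e1 e2
  have e2' : (starRingEnd ℂ) (Φ K j i) * (-Complex.I) + Complex.I * (starRingEnd ℂ) (Φ Kᴴ j i)
    = Complex.I * Φ K i j - Complex.I * Φ Kᴴ i j := by linear_combination e2
  have e3 : -(starRingEnd ℂ) (Φ K j i) + (starRingEnd ℂ) (Φ Kᴴ j i)
    = Φ K i j - Φ Kᴴ i j := by
    apply mul_left_cancel₀ Complex.I_ne_zero
    linear_combination e2'
  simp only [conjTranspose_apply, RCLike.star_def]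
  linear_combination (e3 - e1) / 2

lemma phi_pos (hΦ : IsSchwarz Φ) {K : Matrix (Fin m) (Fin m) ℂ} (hK : K.PosSemidef) :
    (Φ K).PosSemidef := by
  have h := phi_sq hΦ (sp (hK.1.eigenvectorUnitary : Matrix (Fin m) (Fin m) ℂ)
    (fun i => Real.sqrt (hK.1.eigenvalues i)))
  rw [(sp_posSemidef _ _ fun i => Real.sqrt_nonneg _).1.eq, sp_mul (eU _)] at h
  simp only [Real.mul_self_sqrt (hK.eigenvalues_nonneg _)] at h
  rwa [← herm_sp hK.1] at h

lemma ext_trace {k : ℕ} {X Y : Matrix (Fin k) (Fin k) ℂ} (h : ∀ K, (X * K).trace = (Y * K).trace) :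
    X = Y := by
  ext i j
  have := h (Matrix.single j i 1)
  simpa [Matrix.trace_mul_single] using this

lemma psi_star (hΦ : IsSchwarz Φ) (hunital : Φ 1 = 1) (hadj : IsHSAdjoint Φ Ψ)
    (X : Matrix (Fin n) (Fin n) ℂ) : Ψ Xᴴ = (Ψ X)ᴴ := by
  symm
  apply ext_trace
  intro K
  rw [← hadj]
  have h := hadj Xᴴ Kᴴ
  rw [phi_star hΦ hunital] at h
  have h2 := congrArg star h
  rw [← trace_conjTranspose, ← trace_conjTranspose] at h2
  simp only [conjTranspose_mul, conjTranspose_conjTranspose] at h2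
  rw [Matrix.trace_mul_comm, h2, Matrix.trace_mul_comm]

lemma psi_adj (hΦ : IsSchwarz Φ) (hunital : Φ 1 = 1) (hadj : IsHSAdjoint Φ Ψ)
    (X : Matrix (Fin n) (Fin n) ℂ) (K) : (X * Φ K).trace = (Ψ X * K).trace := by
  have := hadj Xᴴ K
  rwa [psi_star hΦ hunital hadj, conjTranspose_conjTranspose, conjTranspose_conjTranspose] at this

lemma psi_pos (hΦ : IsSchwarz Φ) (hunital : Φ 1 = 1) (hadj : IsHSAdjoint Φ Ψ)
    {X : Matrix (Fin n) (Fin n) ℂ} (hX : X.PosSemidef) : (Ψ X).PosSemidef := by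
  refine PosSemidef.of_dotProduct_mulVec_nonneg ?_ fun x => ?_
  · rw [IsHermitian, ← psi_star hΦ hunital hadj, hX.1.eq]
  · have h := trace_mul_nonneg' hX (phi_pos hΦ (posSemidef_vecMulVec_self_star x))
    rw [psi_adj hΦ hunital hadj, Matrix.mul_vecMulVec, Matrix.trace_vecMulVec,
      dotProduct_comm] at h
    exact h

lemma psi_posDef (hΦ : IsSchwarz Φ) (hunital : Φ 1 = 1) (hadj : IsHSAdjoint Φ Ψ)
    {c : ℝ} (hc : 0 < c) (hn : 0 < n) (hsemi : Ψ 1 = (c : ℂ) • 1)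
    {U : Matrix (Fin n) (Fin n) ℂ} (hU : Uᴴ * U = 1) (a : Fin n → ℝ) (ha : ∀ i, 0 < a i) :
    (Ψ (sp U a)).PosDef := by
  haveI : Nonempty (Fin n) := ⟨⟨0, hn⟩⟩
  obtain ⟨i0, h0⟩ := Finite.exists_min a
  have hU' : U * Uᴴ = 1 := mul_eq_one_comm.mp hU
  have e : sp U a = sp U (fun i => a i - a i0) + ((a i0 : ℝ) : ℂ) • 1 := by
    rw [← hU']
    have : Matrix.diagonal (fun i => ((a i : ℝ) : ℂ)) =
      Matrix.diagonal (fun i => ((a i - a i0 : ℝ) : ℂ)) + ((a i0 : ℝ) : ℂ) • 1 := by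
      ext i j
      by_cases h : i = j
      · subst h; simp
      · simp [h]
    rw [sp, sp, this]
    simp [Matrix.mul_add, Matrix.add_mul]
  rw [e, map_add, map_smul, hsemi]
  refine PosDef.posSemidef_add (psi_pos hΦ hunital hadj
    (sp_posSemidef _ _ fun i => by linarith [h0 i])) ?_
  rw [smul_smul]
  refine PosDef.one.smul ?_
  rw [← Complex.ofReal_mul]
  have := mul_pos (ha i0) hc
  exact_mod_cast this

lemma end_left (hΦ : IsSchwarz Φ) (hunital : Φ 1 = 1) (hadj : IsHSAdjoint Φ Ψ)
    {A : Matrix (Fin n) (Fin n) ℂ} (hA : A.PosSemidef) (K : Matrix (Fin m) (Fin m) ℂ) :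
    ((Φ K)ᴴ * A * Φ K).trace.re ≤ (Kᴴ * Ψ A * K).trace.re := by
  have h := trace_mul_nonneg' hA (hΦ Kᴴ)
  rw [conjTranspose_conjTranspose, phi_star hΦ hunital, conjTranspose_conjTranspose,
    Matrix.mul_sub, Matrix.trace_sub, psi_adj hΦ hunital hadj] at h
  have h' := (Complex.le_def.mp h).1
  rw [Complex.sub_re, Complex.zero_re, ← Matrix.mul_assoc, ← Matrix.mul_assoc,
    Matrix.trace_mul_comm, Matrix.trace_mul_comm (A * Φ K), ← Matrix.mul_assoc,
    ← Matrix.mul_assoc] at h'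
  linarith

lemma end_right (hΦ : IsSchwarz Φ) (hunital : Φ 1 = 1) (hadj : IsHSAdjoint Φ Ψ)
    {A : Matrix (Fin n) (Fin n) ℂ} (hA : A.PosSemidef) (K : Matrix (Fin m) (Fin m) ℂ) :
    ((Φ K)ᴴ * Φ K * A).trace.re ≤ (Kᴴ * K * Ψ A).trace.re := by
  have h := trace_mul_nonneg' hA (hΦ K)
  rw [Matrix.mul_sub, Matrix.trace_sub, psi_adj hΦ hunital hadj] at h
  have h' := (Complex.le_def.mp h).1
  rw [Complex.sub_re, Complex.zero_re, 
    Matrix.trace_mul_comm, Matrix.trace_mul_comm A] at h'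
  linarith

set_option maxHeartbeats 1000000 in
lemma core_ineq (hΦ : IsSchwarz Φ) (hunital : Φ 1 = 1) (hadj : IsHSAdjoint Φ Ψ)
    {c : ℝ} (hc : 0 < c) (hsemi : Ψ 1 = (c : ℂ) • 1)
    {U V : Matrix (Fin n) (Fin n) ℂ} {P Q : Matrix (Fin m) (Fin m) ℂ}
    (hU : Uᴴ * U = 1) (hV : Vᴴ * V = 1) (hP : Pᴴ * P = 1) (hQ : Qᴴ * Q = 1)
    {a z : Fin n → ℝ} {α ζ : Fin m → ℝ}
    (ha : ∀ i, 0 < a i) (hz : ∀ i, 0 < z i) (hα : ∀ i, 0 < α i) (hζ : ∀ i, 0 < ζ i)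
    (hA : Ψ (sp U a) = sp P α) (hZ : Ψ (sp V z) = sp Q ζ)
    (s r : ℝ) (hs : 0 ≤ s) (hr : 0 ≤ r) (hsr : s + r ≤ 1) (B : Matrix (Fin n) (Fin n) ℂ) :
    ((Ψ B)ᴴ * sp P (fun i => α i ^ (-s)) * Ψ B * sp Q (fun i => ζ i ^ (-r))).trace.re ≤
    c ^ (1 - s - r) * (Bᴴ * sp U (fun i => a i ^ (-s)) * B * sp V (fun i => z i ^ (-r))).trace.re := by
  have hU' : U * Uᴴ = 1 := mul_eq_one_comm.mp hU
  have hV' : V * Vᴴ = 1 := mul_eq_one_comm.mp hV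
  have hP' : P * Pᴴ = 1 := mul_eq_one_comm.mp hP
  have hQ' : Q * Qᴴ = 1 := mul_eq_one_comm.mp hQ
  let M (p : Fin n × Fin n) (k : Fin m × Fin m) : ℂ :=
    (Uᴴ * Φ (P * Matrix.single k.1 k.2 1 * Qᴴ) * V) p.1 p.2
  let K (v : Fin m × Fin m → ℂ) : Matrix (Fin m) (Fin m) ℂ :=
    P * Matrix.of (fun i j => v (i, j)) * Qᴴ
  have hK : ∀ v i j, (Pᴴ * K v * Q) i j = v (i, j) := by
    intro v i j
    have : Pᴴ * K v * Q = (Pᴴ * P) * Matrix.of (fun i j => v (i, j)) * (Qᴴ * Q) := by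
      simp only [K, Matrix.mul_assoc]
    rw [this, hP, hQ]; simp
  have hM : ∀ v p, ∑ k, M p k * v k = (Uᴴ * Φ (K v) * V) p.1 p.2 := by
    intro v p
    have e : K v = ∑ k : Fin m × Fin m, v k • (P * Matrix.single k.1 k.2 1 * Qᴴ) := by
      simp only [K]
      conv_lhs => rw [Matrix.matrix_eq_sum_single (Matrix.of (fun i j => v (i, j)))]
      rw [Fintype.sum_prod_type]
      simp only [Matrix.mul_sum, Matrix.sum_mul, Matrix.of_apply]
      refine Finset.sum_congr rfl fun i _ => Finset.sum_congr rfl fun j _ => ?_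
      rw [← Matrix.smul_mul, ← Matrix.mul_smul, Matrix.smul_single]
      simp
    rw [e, map_sum, Matrix.mul_sum, Matrix.sum_mul, Matrix.sum_apply]
    refine Finset.sum_congr rfl fun k _ => ?_
    rw [map_smul, Matrix.mul_smul, Matrix.smul_mul, Matrix.smul_apply, smul_eq_mul, mul_comm]
  let Hyp (C s r : ℝ) : Prop := ∀ (w : Fin n × Fin n → ℂ) (v : Fin m × Fin m → ℂ),
    ‖∑ p, ∑ k, w p * M p k * v k‖ ^ 2 ≤
      (∑ p, (C * (a p.1 ^ (-s) * z p.2 ^ (-r))) * ‖w p‖ ^ 2) *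
      (∑ k, (α k.1 ^ s * ζ k.2 ^ r) * ‖v k‖ ^ 2)
  -- endpoints
  have hend : ∀ C s r : ℝ, 0 < C → (∀ v, ∑ p : Fin n × Fin n, (a p.1 ^ s * z p.2 ^ r) *
      ‖(Uᴴ * Φ (K v) * V) p.1 p.2‖ ^ 2 ≤ C * ∑ k : Fin m × Fin m, (α k.1 ^ s * ζ k.2 ^ r) * ‖v k‖ ^ 2) →
      Hyp C s r := by
    intro C s r hC h w v
    have e : ∑ p, ∑ k, w p * M p k * v k = ∑ p, w p * (Uᴴ * Φ (K v) * V) p.1 p.2 := by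
      refine Finset.sum_congr rfl fun p _ => ?_
      rw [← hM, Finset.mul_sum]
      exact Finset.sum_congr rfl fun k _ => by ring
    rw [e]
    have h1 : ‖∑ p, w p * (Uᴴ * Φ (K v) * V) p.1 p.2‖ ^ 2 ≤
        (∑ p, ‖w p‖ * ‖(Uᴴ * Φ (K v) * V) p.1 p.2‖) ^ 2 := by
      gcongr
      refine (norm_sum_le _ _).trans (le_of_eq ?_)
      simp only [norm_mul]
    refine h1.trans ?_
    have h2 := Finset.sum_sq_le_sum_mul_sum_of_sq_eq_mul (Finset.univ : Finset (Fin n × Fin n))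
      (r := fun p => ‖w p‖ * ‖(Uᴴ * Φ (K v) * V) p.1 p.2‖)
      (f := fun p => (a p.1 ^ (-s) * z p.2 ^ (-r)) * ‖w p‖ ^ 2)
      (g := fun p => (a p.1 ^ s * z p.2 ^ r) * ‖(Uᴴ * Φ (K v) * V) p.1 p.2‖ ^ 2)
      (fun p _ => by have := ha p.1; have := hz p.2; positivity)
      (fun p _ => by have := ha p.1; have := hz p.2; positivity)
      (fun p _ => by
        rw [Real.rpow_neg (ha p.1).le, Real.rpow_neg (hz p.2).le]
        have := Real.rpow_pos_of_pos (ha p.1) s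
        have := Real.rpow_pos_of_pos (hz p.2) r
        field_simp)
    refine h2.trans ?_
    refine (mul_le_mul_of_nonneg_left (h v) (Finset.sum_nonneg fun p _ => by
      have := ha p.1; have := hz p.2; positivity)).trans (le_of_eq ?_)
    simp only [mul_assoc C, ← Finset.mul_sum]
    ring
  have hcomb : ∀ C0 s0 r0 C1 s1 r1 t : ℝ, 0 < C0 → 0 < C1 → 0 ≤ t → t ≤ 1 → Hyp C0 s0 r0 →
      Hyp C1 s1 r1 → Hyp (C0 ^ (1 - t) * C1 ^ t) ((1 - t) * s0 + t * s1)
        ((1 - t) * r0 + t * r1) := by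
    intro C0 s0 r0 C1 s1 r1 t hC0 hC1 ht0 ht1 H0 H1 w v
    have hpos : ∀ (C s r : ℝ), 0 < C → ∀ p : Fin n × Fin n,
        0 < C * (a p.1 ^ (-s) * z p.2 ^ (-r)) := by
      intro C s r hC p; have := ha p.1; have := hz p.2; positivity
    have hpos' : ∀ (s r : ℝ), ∀ p : Fin m × Fin m, 0 < (α p.1 ^ s * ζ p.2 ^ r) := by
      intro s r p; have := hα p.1; have := hζ p.2; positivity
    have hpw : ∀ x : ℝ, 0 < x → ∀ u0 u1 : ℝ, (x ^ u0) ^ (1 - t) * (x ^ u1) ^ t =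
        x ^ ((1 - t) * u0 + t * u1) := by
      intro x hx u0 u1
      rw [← Real.rpow_mul hx.le, ← Real.rpow_mul hx.le, ← Real.rpow_add hx]
      congr 1; ring
    refine (interp_aux M _ _ _ _ (hpos C0 s0 r0 hC0) (hpos C1 s1 r1 hC1) (hpos' s0 r0)
      (hpos' s1 r1) H0 H1 t ht0 ht1 w v).trans (le_of_eq ?_)
    congr 1 <;> refine Finset.sum_congr rfl fun p _ => ?_ <;> congr 1
    · have h1 := ha p.1
      have h2 := hz p.2
      rw [Real.mul_rpow hC0.le (by positivity), Real.mul_rpow hC1.le (by positivity),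
        Real.mul_rpow (by positivity) (by positivity), Real.mul_rpow (by positivity) (by positivity),
        show -((1 - t) * s0 + t * s1) = (1 - t) * (-s0) + t * (-s1) by ring,
        show -((1 - t) * r0 + t * r1) = (1 - t) * (-r0) + t * (-r1) by ring,
        ← hpw _ h1, ← hpw _ h2]
      ring
    · have h1 := hα p.1
      have h2 := hζ p.2
      rw [Real.mul_rpow (by positivity) (by positivity), Real.mul_rpow (by positivity) (by positivity),
        ← hpw _ h1, ← hpw _ h2]
      ring
  have S1 : ∀ (a' z' : Fin n → ℝ) v, ∑ p : Fin n × Fin n, (a' p.1 * z' p.2) *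
      ‖(Uᴴ * Φ (K v) * V) p.1 p.2‖ ^ 2 = ((Φ (K v))ᴴ * sp U a' * Φ (K v) * sp V z').trace.re := by
    intro a' z' v
    rw [hsum, Complex.ofReal_re, Fintype.sum_prod_type]
  have S2 : ∀ (a' z' : Fin m → ℝ) v, ∑ p : Fin m × Fin m, (a' p.1 * z' p.2) *
      ‖v p‖ ^ 2 = ((K v)ᴴ * sp P a' * K v * sp Q z').trace.re := by
    intro a' z' v
    rw [hsum, Complex.ofReal_re, Fintype.sum_prod_type]
    simp only [hK]
  have H10 : Hyp 1 1 0 := by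
    refine hend 1 1 0 one_pos fun v => ?_
    simp only [Real.rpow_one, Real.rpow_zero, one_mul]
    rw [S1 a (fun _ => 1), S2 α (fun _ => 1), sp_one hV', sp_one hQ', Matrix.mul_one,
      Matrix.mul_one, ← hA]
    exact end_left hΦ hunital hadj (sp_posSemidef _ _ fun i => (ha i).le) _
  have H01 : Hyp 1 0 1 := by
    refine hend 1 0 1 one_pos fun v => ?_
    simp only [Real.rpow_one, Real.rpow_zero]
    rw [S1 (fun _ => 1) z, S2 (fun _ => 1) ζ, sp_one hU', sp_one hP', Matrix.mul_one,
      Matrix.mul_one, ← hZ, one_mul]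
    exact end_right hΦ hunital hadj (sp_posSemidef _ _ fun i => (hz i).le) _
  have H00 : Hyp c 0 0 := by
    refine hend c 0 0 hc fun v => ?_
    simp only [Real.rpow_zero]
    rw [S1 (fun _ => 1) (fun _ => 1), S2 (fun _ => 1) (fun _ => 1), sp_one hU', sp_one hP',
      sp_one hV', sp_one hQ']
    have h := end_left hΦ hunital hadj PosSemidef.one (K v)
    rw [hsemi] at h
    simp only [Matrix.mul_one, Matrix.mul_smul, Matrix.smul_mul, Matrix.trace_smul, smul_eq_mul,
      Complex.re_ofReal_mul] at h ⊢
    exact h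
  have Hsr : Hyp (c ^ (1 - s - r)) s r := by
    rcases (add_nonneg hs hr).eq_or_lt with h | h
    · have hs' : s = 0 := by linarith
      have hr' : r = 0 := by linarith
      subst hs' hr'
      have e : c ^ ((1 : ℝ) - 0 - 0) = c := by norm_num
      rw [e]; exact H00
    · have h1 := hcomb 1 1 0 1 0 1 (r / (s + r)) one_pos one_pos (by positivity)
        (by rw [div_le_one h]; linarith) H10 H01
      have h2 := hcomb c 0 0 _ _ _ (s + r) hc (by simp) h.le hsr H00 h1
      have E1 : c ^ (1 - (s + r)) * ((1 : ℝ) ^ (1 - r / (s + r)) * (1 : ℝ) ^ (r / (s + r))) ^ (s + r)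
          = c ^ (1 - s - r) := by
        rw [Real.one_rpow, Real.one_rpow, one_mul, Real.one_rpow, mul_one, sub_sub]
      have E2 : (1 - (s + r)) * 0 + (s + r) * ((1 - r / (s + r)) * 1 + r / (s + r) * 0) = s := by
        field_simp; ring
      have E3 : (1 - (s + r)) * 0 + (s + r) * ((1 - r / (s + r)) * 0 + r / (s + r) * 1) = r := by
        field_simp; ring
      rw [E1, E2, E3] at h2
      exact h2
  -- dualize
  set β := Pᴴ * Ψ B * Q with hβ
  let v : Fin m × Fin m → ℂ := fun k => ((α k.1 ^ (-s) * ζ k.2 ^ (-r) : ℝ) : ℂ) * β k.1 k.2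
  let w : Fin n × Fin n → ℂ := fun p => star ((Uᴴ * B * V) p.1 p.2)
  have h := Hsr w v
  rw [hsum, hsum, Complex.ofReal_re, Complex.ofReal_re, ← hβ]
  set N := ∑ i, ∑ j, α i ^ (-s) * ζ j ^ (-r) * ‖β i j‖ ^ 2 with hN
  have hNnn : 0 ≤ N := Finset.sum_nonneg fun i _ => Finset.sum_nonneg fun j _ => by
    have := hα i; have := hζ j; positivity
  have hl : ∑ p, ∑ k, w p * M p k * v k = (N : ℂ) := by
    have e : ∑ p, ∑ k, w p * M p k * v k = ∑ p, w p * (Uᴴ * Φ (K v) * V) p.1 p.2 := by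
      refine Finset.sum_congr rfl fun p _ => ?_
      rw [← hM, Finset.mul_sum]
      exact Finset.sum_congr rfl fun k _ => by ring
    rw [e]
    have e2 : ∑ p, w p * (Uᴴ * Φ (K v) * V) p.1 p.2 = (Bᴴ * Φ (K v)).trace := by
      have t1 : (Bᴴ * Φ (K v)).trace = ((Uᴴ * B * V)ᴴ * (Uᴴ * Φ (K v) * V)).trace := by
        have : (Uᴴ * B * V)ᴴ * (Uᴴ * Φ (K v) * V) = Vᴴ * (Bᴴ * (U * Uᴴ) * Φ (K v) * V) := by
          simp only [conjTranspose_mul, conjTranspose_conjTranspose, Matrix.mul_assoc]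
        rw [this, Matrix.trace_mul_comm Vᴴ, Matrix.mul_assoc _ V Vᴴ, hV', hU', Matrix.mul_one,
          Matrix.mul_one]
      rw [t1, Fintype.sum_prod_type, Finset.sum_comm]
      simp only [w]
      generalize Uᴴ * B * V = G1
      generalize Uᴴ * Φ (K v) * V = G2
      simp [Matrix.trace, Matrix.mul_apply]
    rw [e2, hadj]
    have t2 : ((Ψ B)ᴴ * K v).trace = (βᴴ * Matrix.of (fun i j => v (i, j))).trace := by
      simp only [K, hβ, conjTranspose_mul, conjTranspose_conjTranspose]
      rw [← Matrix.mul_assoc, Matrix.trace_mul_comm]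
      simp only [Matrix.mul_assoc]
    rw [t2, hN]
    push_cast
    rw [Finset.sum_comm]
    simp only [Matrix.trace, Matrix.diag, Matrix.mul_apply, conjTranspose_apply, Matrix.of_apply, v]
    refine Finset.sum_congr rfl fun i _ => Finset.sum_congr rfl fun j _ => ?_
    rw [← Complex.conj_mul']
    push_cast
    simp only [RCLike.star_def]
    ring
  rw [hl] at h
  have hr2 : ∑ k, (α k.1 ^ s * ζ k.2 ^ r) * ‖v k‖ ^ 2 = N := by
    rw [Fintype.sum_prod_type, hN]
    refine Finset.sum_congr rfl fun i _ => Finset.sum_congr rfl fun j _ => ?_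
    have h1 := Real.rpow_pos_of_pos (hα i) s
    have h2 := Real.rpow_pos_of_pos (hζ j) r
    simp only [v]
    rw [Real.rpow_neg (hα i).le, Real.rpow_neg (hζ j).le, norm_mul, Complex.norm_real,
      Real.norm_of_nonneg (by positivity)]
    field_simp
  have hl2 : ∑ p, (c ^ (1 - s - r) * (a p.1 ^ (-s) * z p.2 ^ (-r))) * ‖w p‖ ^ 2 =
      c ^ (1 - s - r) * ∑ i, ∑ j, a i ^ (-s) * z j ^ (-r) * ‖(Uᴴ * B * V) i j‖ ^ 2 := by
    rw [Fintype.sum_prod_type, Finset.mul_sum]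
    refine Finset.sum_congr rfl fun i _ => ?_
    rw [Finset.mul_sum]
    refine Finset.sum_congr rfl fun j _ => ?_
    simp only [w, norm_star]
    ring
  rw [hr2, hl2, Complex.norm_real, Real.norm_of_nonneg hNnn, sq] at h
  rcases hNnn.eq_or_lt with h0 | h0
  · rw [← h0]
    refine mul_nonneg (by positivity) (Finset.sum_nonneg fun i _ => Finset.sum_nonneg fun j _ => ?_)
    have := ha i; have := hz j; positivity
  · exact le_of_mul_le_mul_right h h0

end maps

theorem stmt17 {m n : ℕ} (hm : 0 < m) (s q : ℝ) (hs0 : 0 ≤ s) (hs1 : s < 1)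
    (hq0 : 1 / (2 - s) ≤ q) (hq1 : q < 1)
    (Φ : Matrix (Fin m) (Fin m) ℂ →ₗ[ℂ] Matrix (Fin n) (Fin n) ℂ)
    (Ψ : Matrix (Fin n) (Fin n) ℂ →ₗ[ℂ] Matrix (Fin m) (Fin m) ℂ)
    (hΦ : IsSchwarz Φ) (hadj : IsHSAdjoint Φ Ψ)
    (hunital : Φ 1 = 1) (hsemi : Ψ 1 = (((n : ℝ) / m : ℝ) : ℂ) • 1)
    (A : Matrix (Fin n) (Fin n) ℂ) (hA : A.PosDef)
    (B : Matrix (Fin n) (Fin n) ℂ) (hB : IsUnit B) :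
    ((n : ℝ) / m) ^ ((2 - s) * q - 1) * (mpow (Bᴴ * mpow A (-s) * B) q).trace.re ≥
      (mpow ((Ψ B)ᴴ * mpow (Ψ A) (-s) * Ψ B) q).trace.re := by
  have hq : 0 < q := lt_of_lt_of_le (by apply div_pos <;> linarith) hq0
  have hPsi0 : (Ψ A).PosSemidef := psi_pos hΦ hunital hadj hA.posSemidef
  have hXh : ((Ψ B)ᴴ * mpow (Ψ A) (-s) * Ψ B).PosSemidef := by
    refine PosSemidef.conjTranspose_mul_mul_same ?_ _
    rw [mpow_sp hPsi0.1]
    exact sp_posSemidef _ _ fun i => Real.rpow_nonneg (hPsi0.eigenvalues_nonneg i) _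
  rcases Nat.eq_zero_or_pos n with hn | hn
  · subst hn
    have hB0 : B = 0 := Subsingleton.elim _ _
    have h0 : (Ψ B)ᴴ * mpow (Ψ A) (-s) * Ψ B = 0 := by simp [hB0]
    have hev := (hXh.1.eigenvalues_eq_zero_iff).mpr h0
    rw [mpow_sp hXh.1, sp_trace (eU _), Complex.ofReal_re]
    simp [hev, Real.zero_rpow hq.ne', Matrix.trace]
  set c : ℝ := (n : ℝ) / m with hcdef
  have hc : 0 < c := by
    have h1 : (0 : ℝ) < n := by exact_mod_cast hn
    have h2 : (0 : ℝ) < m := by exact_mod_cast hm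
    positivity
  set r : ℝ := 1 / q - 1 with hr
  have hrq : r * q = 1 - q := by rw [hr]; field_simp
  have hr0 : 0 ≤ r := by
    have : 1 ≤ 1 / q := by rw [le_div_iff₀ hq]; linarith
    linarith
  have hsr : s + r ≤ 1 := by
    have h2 : 0 < 2 - s := by linarith
    have : 1 / q ≤ 2 - s := by
      rw [div_le_iff₀ hq]
      rw [div_le_iff₀ h2] at hq0
      linarith
    linarith
  have hX : (Bᴴ * mpow A (-s) * B).PosDef := by
    rw [mpow_sp hA.1]
    refine PosDef.conjTranspose_mul_mul_same (sp_posDef (eU _) _ fun i =>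
      Real.rpow_pos_of_pos (hA.eigenvalues_pos i) _) ?_
    exact Matrix.mulVec_injective_of_isUnit hB
  set X := Bᴴ * mpow A (-s) * B with hXdef
  set Xh := (Ψ B)ᴴ * mpow (Ψ A) (-s) * Ψ B with hXhdef
  set V := (hX.1.eigenvectorUnitary : Matrix (Fin n) (Fin n) ℂ) with hVdef
  set x := hX.1.eigenvalues with hx
  have hxpos : ∀ i, 0 < x i := hX.eigenvalues_pos
  set μ : ℝ := c ^ ((2 - s) * q - 1) with hμ
  have hμpos : 0 < μ := Real.rpow_pos_of_pos hc _
  let z : Fin n → ℝ := fun j => μ * x j ^ q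
  have hz : ∀ j, 0 < z j := fun j => mul_pos hμpos (Real.rpow_pos_of_pos (hxpos j) _)
  have hZp : (Ψ (sp V z)).PosDef := psi_posDef hΦ hunital hadj hc hn hsemi (eU _) z hz
  have hAp : (Ψ A).PosDef := by
    rw [herm_sp hA.1]
    exact psi_posDef hΦ hunital hadj hc hn hsemi (eU _) _ hA.eigenvalues_pos
  have y1 := young_trace (eU hXh.1) (eU hZp.1) hXh.1.eigenvalues hZp.1.eigenvalues
    hXh.eigenvalues_nonneg hZp.eigenvalues_pos q r hq hq1 hrq
  rw [← herm_sp hXh.1] at y1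
  have hcore := core_ineq hΦ hunital hadj hc hsemi (eU hA.1) (eU hX.1) (eU hAp.1) (eU hZp.1)
    hA.eigenvalues_pos hz hAp.eigenvalues_pos hZp.eigenvalues_pos
    (by rw [← herm_sp hA.1]; exact herm_sp hAp.1) (herm_sp hZp.1) s r hs0 hr0 hsr B
  rw [← mpow_sp hA.1, ← mpow_sp hAp.1, ← hXdef, ← hXhdef] at hcore
  have htrZ : ∑ j, hZp.1.eigenvalues j = ∑ j, z j := by
    have h1 : (Ψ (sp V z)).trace = (sp V z).trace := by
      have := psi_adj hΦ hunital hadj (sp V z) 1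
      rw [hunital, Matrix.mul_one, Matrix.mul_one] at this
      exact this.symm
    rw [sp_trace (eU _)] at h1
    conv_lhs at h1 => rw [herm_sp hZp.1]
    rw [sp_trace (eU _)] at h1
    exact_mod_cast h1
  have hXZ : (X * sp V (fun i => z i ^ (-r))).trace.re = μ ^ (-r) * ∑ j, x j ^ q := by
    conv_lhs => rw [herm_sp hX.1]
    rw [sp_mul (eU _), sp_trace (eU _), Complex.ofReal_re, Finset.mul_sum]
    refine Finset.sum_congr rfl fun j _ => ?_
    have h1 : z j ^ (-r) = μ ^ (-r) * x j ^ (q - 1) := by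
      simp only [z]
      rw [Real.mul_rpow hμpos.le (Real.rpow_nonneg (hxpos j).le _), ← Real.rpow_mul (hxpos j).le]
      congr 2; linarith
    have h2 : x j ^ q = x j * x j ^ (q - 1) := by
      nth_rewrite 2 [← Real.rpow_one (x j)]
      rw [← Real.rpow_add (hxpos j)]; congr 1; ring
    rw [h1, h2]; ring
  have hzs : ∑ j, z j = μ * ∑ j, x j ^ q := by rw [Finset.mul_sum]
  have hcμ : c ^ (1 - s - r) * μ ^ (-r) = μ := by
    rw [hμ, ← Real.rpow_mul hc.le, ← Real.rpow_add hc]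
    congr 1
    have hr' : r = 1 / q - 1 := rfl
    rw [hr']; field_simp; ring
  rw [mpow_sp hX.1, mpow_sp hXh.1, sp_trace (eU _), sp_trace (eU _), Complex.ofReal_re,
    Complex.ofReal_re, ge_iff_le]
  refine y1.trans ?_
  rw [htrZ, hzs]
  rw [hXZ, ← mul_assoc, hcμ] at hcore
  have := mul_le_mul_of_nonneg_left hcore hq.le
  linarith
end

section
/- Let 0 ≤ s < 1 and 1/(2-s) ≤ q < 1. Then the map (A, B) ↦ tr[(B* A^{-s} B)^q] is jointly convex on pairs of (positive definite A ∈ M_n(ℂ), B ∈ M_n(ℂ)). -/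
open Matrix
open scoped ComplexOrder

open scoped Kronecker

lemma mpow_eq {k : ℕ} {A : Matrix (Fin k) (Fin k) ℂ} (hA : A.IsHermitian) (p : ℝ) :
    mpow A p = (hA.eigenvectorUnitary : Matrix (Fin k) (Fin k) ℂ) *
      Matrix.diagonal (fun i => ((hA.eigenvalues i ^ p : ℝ) : ℂ)) *
      (hA.eigenvectorUnitary : Matrix (Fin k) (Fin k) ℂ)ᴴ := by
  simp [mpow, hA]

lemma mpow_cfc {k : ℕ} {A : Matrix (Fin k) (Fin k) ℂ} (hA : A.IsHermitian) (p : ℝ) :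
    mpow A p = cfc (fun x : ℝ => x ^ p) A := by
  rw [mpow_eq hA, hA.cfc_eq]
  rfl

lemma mpow_herm {k : ℕ} {A : Matrix (Fin k) (Fin k) ℂ} (hA : A.IsHermitian) (p : ℝ) :
    (mpow A p).IsHermitian := by
  rw [mpow_cfc hA]
  exact cfc_predicate _ A

lemma cont_spec {k : ℕ} {A : Matrix (Fin k) (Fin k) ℂ} (f : ℝ → ℝ) :
    ContinuousOn f (spectrum ℝ A) := by
  have : (spectrum ℝ A).Finite := Matrix.finite_real_spectrum
  exact this.continuousOn f

lemma spec_pos {k : ℕ} {A : Matrix (Fin k) (Fin k) ℂ} (hA : A.PosDef) {x : ℝ}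
    (hx : x ∈ spectrum ℝ A) : 0 < x := by
  rw [hA.1.spectrum_real_eq_range_eigenvalues] at hx
  obtain ⟨i, rfl⟩ := hx
  exact hA.eigenvalues_pos i

lemma spec_nonneg {k : ℕ} {A : Matrix (Fin k) (Fin k) ℂ} (hA : A.PosSemidef) {x : ℝ}
    (hx : x ∈ spectrum ℝ A) : 0 ≤ x := by
  rw [hA.1.spectrum_real_eq_range_eigenvalues] at hx
  obtain ⟨i, rfl⟩ := hx
  exact hA.eigenvalues_nonneg i

lemma mpow_add {k : ℕ} {A : Matrix (Fin k) (Fin k) ℂ} (hA : A.PosDef) (p r : ℝ) :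
    mpow A p * mpow A r = mpow A (p + r) := by
  rw [mpow_cfc hA.1, mpow_cfc hA.1, mpow_cfc hA.1, ← cfc_mul _ _ A (cont_spec _) (cont_spec _)]
  apply cfc_congr
  intro x hx
  exact (Real.rpow_add (spec_pos hA hx) p r).symm

lemma mpow_zero {k : ℕ} {A : Matrix (Fin k) (Fin k) ℂ} (hA : A.IsHermitian) :
    mpow A 0 = 1 := by
  rw [mpow_cfc hA]
  simp only [Real.rpow_zero]
  exact cfc_const_one ℝ A hA

lemma mpow_one {k : ℕ} {A : Matrix (Fin k) (Fin k) ℂ} (hA : A.IsHermitian) :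
    mpow A 1 = A := by
  rw [mpow_cfc hA]
  simp only [Real.rpow_one]
  exact cfc_id' ℝ A hA

lemma mpow_cont {k : ℕ} {A : Matrix (Fin k) (Fin k) ℂ} (hA : A.PosDef) :
    Continuous (fun p : ℝ => mpow A p) := by
  simp only [mpow_eq hA.1]
  refine ((continuous_const (y := (hA.1.eigenvectorUnitary : Matrix (Fin k) (Fin k) ℂ))).mul
    (Continuous.matrix_diagonal ?_)).mul continuous_const
  refine continuous_pi fun i => Complex.continuous_ofReal.comp ?_
  exact Real.continuous_const_rpow (hA.eigenvalues_pos i).ne'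

lemma trace_cfc {k : ℕ} {A : Matrix (Fin k) (Fin k) ℂ} (hA : A.IsHermitian) (f : ℝ → ℝ) :
    (cfc f A).trace.re = ∑ i, f (hA.eigenvalues i) := by
  have h : cfc f A = (hA.eigenvectorUnitary : Matrix (Fin k) (Fin k) ℂ) *
      Matrix.diagonal (fun i => ((f (hA.eigenvalues i) : ℝ) : ℂ)) *
      (hA.eigenvectorUnitary : Matrix (Fin k) (Fin k) ℂ)ᴴ := by
    rw [hA.cfc_eq]; rfl
  have hu : (hA.eigenvectorUnitary : Matrix (Fin k) (Fin k) ℂ)ᴴ *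
    (hA.eigenvectorUnitary : Matrix (Fin k) (Fin k) ℂ) = 1 :=
    Unitary.coe_star_mul_self hA.eigenvectorUnitary
  rw [h, Matrix.trace_mul_comm, ← Matrix.mul_assoc, hu, Matrix.one_mul, Matrix.trace_diagonal,
    Complex.re_sum]
  simp

/-- weights -/
lemma trace_two {k : ℕ} {Y Z : Matrix (Fin k) (Fin k) ℂ} (hY : Y.IsHermitian)
    (hZ : Z.IsHermitian) : ∃ w : Fin k → Fin k → ℝ, (∀ i j, 0 ≤ w i j) ∧ ∀ a b : ℝ,
      (mpow Y a * mpow Z b).trace.re =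
        ∑ i, ∑ j, w i j * (hY.eigenvalues i ^ a * hZ.eigenvalues j ^ b) := by
  set U : Matrix (Fin k) (Fin k) ℂ := (hY.eigenvectorUnitary : Matrix (Fin k) (Fin k) ℂ)
  set V : Matrix (Fin k) (Fin k) ℂ := (hZ.eigenvectorUnitary : Matrix (Fin k) (Fin k) ℂ)
  refine ⟨fun i j => Complex.normSq ((Uᴴ * V) i j), fun i j => Complex.normSq_nonneg _, ?_⟩
  intro a b
  set D := Matrix.diagonal (fun i => ((hY.eigenvalues i ^ a : ℝ) : ℂ))
  set E := Matrix.diagonal (fun i => ((hZ.eigenvalues i ^ b : ℝ) : ℂ))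
  have : (mpow Y a * mpow Z b).trace = (D * (Uᴴ * V) * E * (Uᴴ * V)ᴴ).trace := by
    rw [mpow_eq hY, mpow_eq hZ, Matrix.conjTranspose_mul, Matrix.conjTranspose_conjTranspose]
    change (U * D * Uᴴ * (V * E * Vᴴ)).trace = _
    rw [Matrix.mul_assoc U D, Matrix.mul_assoc U, Matrix.trace_mul_comm]
    simp only [Matrix.mul_assoc]
  rw [this, Matrix.trace, Complex.re_sum]
  refine Finset.sum_congr rfl fun i _ => ?_
  rw [Matrix.diag_apply, Matrix.mul_apply, Complex.re_sum]
  refine Finset.sum_congr rfl fun j _ => ?_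
  rw [Matrix.mul_diagonal, Matrix.diagonal_mul, Matrix.conjTranspose_apply]
  set z := (Uᴴ * V) i j
  rw [show ((hY.eigenvalues i ^ a : ℝ) : ℂ) * z * ((hZ.eigenvalues j ^ b : ℝ) : ℂ) * star z =
    ((hY.eigenvalues i ^ a : ℝ) : ℂ) * ((hZ.eigenvalues j ^ b : ℝ) : ℂ) * (z * (starRingEnd ℂ) z) by
      rw [starRingEnd_apply]; ring]
  rw [Complex.mul_conj, ← Complex.ofReal_mul, ← Complex.ofReal_mul, Complex.ofReal_re]
  ring

lemma young_trace_s18 {k : ℕ} {Y Z : Matrix (Fin k) (Fin k) ℂ} (hY : Y.PosSemidef)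
    (hZ : Z.PosDef) (q : ℝ) (hq0 : 0 < q) (hq1 : q < 1) :
    (mpow Y q).trace.re ≤ q * (Y * mpow Z (-(1 / q - 1))).trace.re + (1 - q) * Z.trace.re := by
  obtain ⟨w, hw, h⟩ := trace_two hY.1 hZ.1
  have h1 := h q 0
  have h2 := h 1 (-(1 / q - 1))
  have h3 := h 0 1
  rw [mpow_zero hZ.1, Matrix.mul_one] at h1
  rw [mpow_one hY.1] at h2
  rw [mpow_zero hY.1, Matrix.one_mul, mpow_one hZ.1] at h3
  rw [h1, h2, h3, Finset.mul_sum, Finset.mul_sum, ← Finset.sum_add_distrib]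
  refine Finset.sum_le_sum fun i _ => ?_
  rw [Finset.mul_sum, Finset.mul_sum, ← Finset.sum_add_distrib]
  refine Finset.sum_le_sum fun j _ => ?_
  have hy := hY.eigenvalues_nonneg i
  have hz := hZ.eigenvalues_pos j
  set y := hY.1.eigenvalues i
  set z := hZ.1.eigenvalues j
  have key := Real.geom_mean_le_arith_mean2_weighted hq0.le (by linarith : 0 ≤ 1 - q)
    (mul_nonneg hy (Real.rpow_nonneg hz.le (-(1 / q - 1)))) hz.le (by ring)
  have : (y * z ^ (-(1 / q - 1))) ^ q * z ^ (1 - q) = y ^ q := by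
    rw [Real.mul_rpow hy (Real.rpow_nonneg hz.le _), ← Real.rpow_mul hz.le, mul_assoc,
      ← Real.rpow_add hz]
    have : -(1 / q - 1) * q + (1 - q) = 0 := by field_simp; ring
    rw [this]; simp
  rw [this] at key
  simp only [Real.rpow_zero, Real.rpow_one, mul_one, one_mul]
  nlinarith [mul_le_mul_of_nonneg_left key (hw i j)]

lemma cfc_posDef {k : ℕ} {Y : Matrix (Fin k) (Fin k) ℂ} (hY : Y.IsHermitian) (f : ℝ → ℝ)
    (hf : ∀ i, 0 < f (hY.eigenvalues i)) : (cfc f Y).PosDef := by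
  have hh : (cfc f Y).IsHermitian := cfc_predicate f Y
  rw [hh.posDef_iff_eigenvalues_pos]
  intro i
  have := hh.eigenvalues_mem_spectrum_real i
  rw [cfc_map_spectrum (R := ℝ) f Y hY.isSelfAdjoint (cont_spec _)] at this
  obtain ⟨x, hx, hx'⟩ := this
  rw [hY.spectrum_real_eq_range_eigenvalues] at hx
  obtain ⟨j, rfl⟩ := hx
  rw [← hx']; exact hf j

lemma exists_Z {k : ℕ} {Y : Matrix (Fin k) (Fin k) ℂ} (hY : Y.PosSemidef)
    (q : ℝ) (hq0 : 0 < q) (hq1 : q < 1) (δ : ℝ) (hδ : 0 < δ) :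
    ∃ Z : Matrix (Fin k) (Fin k) ℂ, Z.PosDef ∧
    q * (Y * mpow Z (-(1 / q - 1))).trace.re + (1 - q) * Z.trace.re ≤
      (mpow Y q).trace.re + k * δ := by
  set f : ℝ → ℝ := fun y => if 0 < y then y ^ q else δ with hf
  have hfp : ∀ y, 0 < f y := by
    intro y
    simp only [hf]
    split_ifs with h
    · positivity
    · exact hδ
  have hZ : (cfc f Y).PosDef := cfc_posDef hY.1 f (fun i => hfp _)
  refine ⟨cfc f Y, hZ, ?_⟩
  have h1 : Y * mpow (cfc f Y) (-(1 / q - 1)) = cfc (fun y => y * (f y) ^ (-(1 / q - 1))) Y := by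
    have hc : cfc (fun y => (f y) ^ (-(1 / q - 1))) Y =
        cfc (fun x : ℝ => x ^ (-(1 / q - 1))) (cfc f Y) := 
      cfc_comp' (fun x : ℝ => x ^ (-(1 / q - 1))) f Y
        ((Matrix.finite_real_spectrum.image f).continuousOn _) (cont_spec _) hY.1.isSelfAdjoint
    rw [mpow_cfc hZ.1, ← hc]
    conv_lhs => enter [1]; rw [← cfc_id' ℝ Y hY.1.isSelfAdjoint]
    rw [← cfc_mul _ _ Y (cont_spec _) (cont_spec _)]
  rw [h1, mpow_cfc hY.1, trace_cfc hY.1, trace_cfc hY.1, trace_cfc hY.1, Finset.mul_sum,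
    Finset.mul_sum, ← Finset.sum_add_distrib]
  have : (k : ℝ) * δ = ∑ i : Fin k, δ := by simp
  rw [this, ← Finset.sum_add_distrib]
  refine Finset.sum_le_sum fun i _ => ?_
  have hy := hY.eigenvalues_nonneg i
  set y := hY.1.eigenvalues i
  simp only [hf]
  split_ifs with h
  · rw [← Real.rpow_mul hy]
    have : y * y ^ (q * (-(1 / q - 1))) = y ^ q := by
      conv_lhs => enter [1]; rw [← Real.rpow_one y]
      rw [← Real.rpow_add h]
      congr 1
      field_simp; ring
    rw [this]
    nlinarith
  · have : y = 0 := le_antisymm (not_lt.mp h) hy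
    rw [this, Real.zero_rpow hq0.ne']
    nlinarith

/-- real quadratic form -/
noncomputable def qf_s18 {ι : Type*} [Fintype ι] (M : Matrix ι ι ℂ) (x y : ι → ℂ) : ℝ :=
  (star x ⬝ᵥ M *ᵥ y).re

lemma dot_herm {ι : Type*} [Fintype ι] {M : Matrix ι ι ℂ} (hM : M.IsHermitian) (x y : ι → ℂ) :
    star (M *ᵥ x) ⬝ᵥ y = star x ⬝ᵥ M *ᵥ y := by
  rw [star_mulVec, hM.eq, dotProduct_mulVec]

lemma dot_self_nonneg {ι : Type*} [Fintype ι] (x : ι → ℂ) : 0 ≤ (star x ⬝ᵥ x).re :=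
  (Complex.le_def.mp (dotProduct_star_self_nonneg x)).1.trans_eq (by rw [dotProduct_comm])

lemma dot_re_comm {ι : Type*} [Fintype ι] (x y : ι → ℂ) :
    (star x ⬝ᵥ y).re = (star y ⬝ᵥ x).re := by
  have : star y ⬝ᵥ x = star (star x ⬝ᵥ y) := by
    rw [star_dotProduct]
  rw [this]; simp

lemma piece {ι : Type*} [Fintype ι] {R T : Matrix ι ι ℂ} (hR : R.IsHermitian)
    (hT : T.IsHermitian) (x y : ι → ℂ) :
    2 * qf_s18 (R * T) x y ≤ qf_s18 (R * R) x x + qf_s18 (T * T) y y := by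
  have h := dot_self_nonneg (R *ᵥ x - T *ᵥ y)
  rw [star_sub, sub_dotProduct, dotProduct_sub, dotProduct_sub] at h
  have h2 := dot_re_comm (T *ᵥ y) (R *ᵥ x)
  simp only [Complex.sub_re] at h
  rw [h2] at h
  rw [dot_herm hR, dot_herm hR, dot_herm hT] at h
  unfold qf_s18
  simp only [← mulVec_mulVec]
  linarith

lemma geo {ι : Type*} [Fintype ι] [DecidableEq ι] {N R T S Ri Si Ti : Matrix ι ι ℂ}
    (hN : N.IsHermitian) (hR : R.IsHermitian) (hT : T.IsHermitian) (hS : S.IsHermitian)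
    (hSi : Si.IsHermitian) (hRi : Ri.IsHermitian)
    (hSS : S * Si = 1) (hSS' : Si * S = 1) (hRR : R * Ri = 1) (hRR' : Ri * R = 1)
    (hTT : Ti * T = 1) (hG : S * S = R * T)
    (h : ∀ x y, 2 * qf_s18 N x y ≤ qf_s18 (R * R) x x + qf_s18 (T * T) y y) (x : ι → ℂ) :
    qf_s18 N x x ≤ qf_s18 (R * T) x x := by
  have hK : (1 - Si * N * Si).IsHermitian := by
    refine isHermitian_one.sub ?_
    have := isHermitian_conjTranspose_mul_mul Si hN
    rwa [hSi.eq] at this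
  have hP : (1 - Si * N * Si).PosSemidef := by
    rw [hK.posSemidef_iff_eigenvalues_nonneg]
    intro i
    set κ := hK.eigenvalues i with hκ
    set v : ι → ℂ := ⇑(hK.eigenvectorBasis i) with hv
    have hv0 : v ≠ 0 := by
      intro h0
      apply hK.eigenvectorBasis.orthonormal.ne_zero i
      ext j
      exact congrFun h0 j
    have he : (1 - Si * N * Si) *ᵥ v = (κ : ℂ) • v := by
      have := hK.mulVec_eigenvectorBasis i
      rw [← hv, ← hκ] at this
      rw [this]
      ext j; simp
    set u := Si *ᵥ v with hu
    have hSu : S *ᵥ u = v := by rw [hu, mulVec_mulVec, hSS, one_mulVec]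
    have hNu : N *ᵥ u = (1 - κ : ℂ) • (R *ᵥ (T *ᵥ u)) := by
      rw [sub_mulVec, one_mulVec] at he
      have h1 : (Si * N * Si) *ᵥ v = (1 - κ : ℂ) • v := by
        rw [sub_smul, one_smul, ← he]; abel
      have h2 : S *ᵥ ((Si * N * Si) *ᵥ v) = N *ᵥ u := by
        rw [mulVec_mulVec, hu, mulVec_mulVec]
        congr 1
        rw [← Matrix.mul_assoc, ← Matrix.mul_assoc, hSS, Matrix.one_mul]
      rw [← h2, h1, mulVec_smul, mulVec_mulVec, ← hG, ← mulVec_mulVec, hSu]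
    have hTu : T *ᵥ u ≠ 0 := by
      intro h0
      apply hv0
      have : u = 0 := by
        have := congrArg (fun z => Ti *ᵥ z) h0
        simpa [mulVec_mulVec, hTT] using this
      rw [← hSu, this, mulVec_zero]
    have hpos : 0 < (star (T *ᵥ u) ⬝ᵥ (T *ᵥ u)).re :=
      (Complex.lt_def.mp (dotProduct_star_self_pos_iff.mpr hTu)).1.trans_eq
        (by rw [dotProduct_comm])
    have hh := h (Ri *ᵥ (T *ᵥ u)) u
    have e1 : qf_s18 N (Ri *ᵥ (T *ᵥ u)) u = (1 - κ) * (star (T *ᵥ u) ⬝ᵥ (T *ᵥ u)).re := by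
      unfold qf_s18
      rw [hNu, dot_herm hRi, mulVec_smul, mulVec_mulVec _ Ri R, hRR', one_mulVec, dotProduct_smul,
        smul_eq_mul, ← Complex.ofReal_one, ← Complex.ofReal_sub, Complex.re_ofReal_mul]
    have e2 : qf_s18 (R * R) (Ri *ᵥ (T *ᵥ u)) (Ri *ᵥ (T *ᵥ u)) = (star (T *ᵥ u) ⬝ᵥ (T *ᵥ u)).re := by
      unfold qf_s18
      rw [← mulVec_mulVec, mulVec_mulVec _ R Ri, hRR, one_mulVec, dot_herm hRi, mulVec_mulVec _ Ri R,
        hRR', one_mulVec]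
    have e3 : qf_s18 (T * T) u u = (star (T *ᵥ u) ⬝ᵥ (T *ᵥ u)).re := by
      unfold qf_s18
      rw [← mulVec_mulVec, dot_herm hT]
    rw [e1, e2, e3] at hh
    show 0 ≤ κ
    nlinarith
  have hx := (Complex.le_def.mp (hP.dotProduct_mulVec_nonneg (S *ᵥ x))).1
  rw [dot_herm hS, mulVec_mulVec, mulVec_mulVec] at hx
  have e : S * ((1 - Si * N * Si) * S) = R * T - N := by
    rw [Matrix.sub_mul, Matrix.mul_sub, Matrix.one_mul, hG, Matrix.mul_assoc _ Si S, hSS',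
      Matrix.mul_one, ← Matrix.mul_assoc, hSS, Matrix.one_mul]
  rw [Matrix.mul_assoc, e, sub_mulVec, dotProduct_sub, Complex.sub_re] at hx
  unfold qf_s18
  simpa using hx

lemma seg (C : Set ℝ) (hC : IsClosed C) (h0 : (0 : ℝ) ∈ C) (h1 : (1 : ℝ) ∈ C)
    (hm : ∀ a ∈ C, ∀ b ∈ C, (a + b) / 2 ∈ C) {θ : ℝ} (hθ0 : 0 ≤ θ) (hθ1 : θ ≤ 1) : θ ∈ C := by
  obtain ⟨a, ⟨haC, ha0, haθ⟩, hamax⟩ :=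
    (isCompact_Icc.inter_left hC : IsCompact (C ∩ Set.Icc 0 θ)).exists_isGreatest
      ⟨0, h0, le_refl _, hθ0⟩
  obtain ⟨b, ⟨hbC, hbθ, hb1⟩, hbmin⟩ :=
    (isCompact_Icc.inter_left hC : IsCompact (C ∩ Set.Icc θ 1)).exists_isLeast
      ⟨1, h1, hθ1, le_refl _⟩
  have hmid := hm a haC b hbC
  rcases le_total ((a + b) / 2) θ with h | h
  · have := hamax ⟨hmid, by constructor <;> linarith⟩
    have : b = θ := by linarith
    rwa [← this]
  · have := hbmin ⟨hmid, by constructor <;> linarith⟩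
    have : a = θ := by linarith
    rwa [← this]

noncomputable def Tk {n : ℕ} (A Z : Matrix (Fin n) (Fin n) ℂ) (s t : ℝ) :
    Matrix (Fin n × Fin n) (Fin n × Fin n) ℂ := (mpow Z t)ᵀ ⊗ₖ mpow A s

lemma Tk_mul {n : ℕ} {A Z : Matrix (Fin n) (Fin n) ℂ} (hA : A.PosDef) (hZ : Z.PosDef)
    (s t s' t' : ℝ) : Tk A Z s t * Tk A Z s' t' = Tk A Z (s + s') (t + t') := by
  unfold Tk
  rw [← mul_kronecker_mul, mpow_add hA, ← Matrix.transpose_mul, mpow_add hZ, add_comm t' t]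

lemma Tk_herm {n : ℕ} {A Z : Matrix (Fin n) (Fin n) ℂ} (hA : A.PosDef) (hZ : Z.PosDef)
    (s t : ℝ) : (Tk A Z s t).IsHermitian := by
  unfold Tk Matrix.IsHermitian
  rw [conjTranspose_kronecker, (mpow_herm hA.1 s).eq, (mpow_herm hZ.1 t).transpose.eq]

lemma Tk_zero {n : ℕ} {A Z : Matrix (Fin n) (Fin n) ℂ} (hA : A.PosDef) (hZ : Z.PosDef) :
    Tk A Z 0 0 = 1 := by
  unfold Tk
  rw [mpow_zero hA.1, mpow_zero hZ.1, transpose_one, one_kronecker_one]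

lemma Tk_cont {n : ℕ} {A Z : Matrix (Fin n) (Fin n) ℂ} (hA : A.PosDef) (hZ : Z.PosDef)
    (f g : ℝ → ℝ) (hf : Continuous f) (hg : Continuous g) (x : Fin n × Fin n → ℂ) :
    Continuous (fun θ => qf_s18 (Tk A Z (f θ) (g θ)) x x) := by
  unfold qf_s18
  have h1 : Continuous (fun θ => Tk A Z (f θ) (g θ)) := by
    unfold Tk
    refine continuous_matrix fun i j => ?_
    simp only [kroneckerMap_apply, transpose_apply]
    exact (((mpow_cont hZ).comp hg).matrix_elem _ _).mul (((mpow_cont hA).comp hf).matrix_elem _ _)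
  exact Complex.continuous_re.comp
    (continuous_const.dotProduct (h1.matrix_mulVec continuous_const))

lemma Tk_piece {n : ℕ} {A Z : Matrix (Fin n) (Fin n) ℂ} (hA : A.PosDef) (hZ : Z.PosDef)
    (s t s' t' : ℝ) (x y : Fin n × Fin n → ℂ) :
    2 * qf_s18 (Tk A Z ((s + s') / 2) ((t + t') / 2)) x y ≤
      qf_s18 (Tk A Z s t) x x + qf_s18 (Tk A Z s' t') y y := by
  have := piece (Tk_herm hA hZ (s / 2) (t / 2)) (Tk_herm hA hZ (s' / 2) (t' / 2)) x y
  simp only [Tk_mul hA hZ] at this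
  ring_nf at this ⊢
  exact this

lemma qf_vec {n : ℕ} (A Z B : Matrix (Fin n) (Fin n) ℂ) (s t : ℝ) :
    qf_s18 (Tk A Z s t) (vec B) (vec B) = (Bᴴ * mpow A s * B * mpow Z t).trace.re := by
  unfold qf_s18 Tk
  rw [kronecker_mulVec_vec, star_vec_dotProduct_vec, transpose_transpose]
  simp only [Matrix.mul_assoc]

lemma qf_add {ι : Type*} [Fintype ι] (M N : Matrix ι ι ℂ) (x y : ι → ℂ) (c : ℝ) :
    qf_s18 ((c : ℂ) • M + ((1 : ℂ) - (c : ℂ)) • N) x y = c * qf_s18 M x y + (1 - c) * qf_s18 N x y := by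
  unfold qf_s18
  rw [add_mulVec, dotProduct_add, smul_mulVec, smul_mulVec, dotProduct_smul, dotProduct_smul,
    ← Complex.ofReal_one, ← Complex.ofReal_sub, smul_eq_mul, smul_eq_mul, Complex.add_re,
    Complex.re_ofReal_mul, Complex.re_ofReal_mul]

lemma lieb_s18 {n : ℕ} {A₁ A₂ Z₁ Z₂ A Z : Matrix (Fin n) (Fin n) ℂ} (hA₁ : A₁.PosDef)
    (hA₂ : A₂.PosDef) (hZ₁ : Z₁.PosDef) (hZ₂ : Z₂.PosDef) (hA : A.PosDef) (hZ : Z.PosDef)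
    (c : ℝ) (hc0 : 0 ≤ c) (hc1 : c ≤ 1)
    (hAe : A = (c : ℂ) • A₁ + ((1 : ℂ) - (c : ℂ)) • A₂)
    (hZe : Z = (c : ℂ) • Z₁ + ((1 : ℂ) - (c : ℂ)) • Z₂)
    (s t : ℝ) (hs : 0 ≤ s) (ht : 0 ≤ t) (hst : s + t ≤ 1) (x : Fin n × Fin n → ℂ) :
    c * qf_s18 (Tk A₁ Z₁ s t) x x + (1 - c) * qf_s18 (Tk A₂ Z₂ s t) x x ≤ qf_s18 (Tk A Z s t) x x := by
  set P : ℝ → ℝ → Prop := fun s t => ∀ x,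
    c * qf_s18 (Tk A₁ Z₁ s t) x x + (1 - c) * qf_s18 (Tk A₂ Z₂ s t) x x ≤ qf_s18 (Tk A Z s t) x x with hP
  have hcl : ∀ f g : ℝ → ℝ, Continuous f → Continuous g → IsClosed {θ | P (f θ) (g θ)} := by
    intro f g hf hg
    simp only [hP, Set.ofPred_forall]
    refine isClosed_iInter fun x => isClosed_le ?_ (Tk_cont hA hZ f g hf hg x)
    exact ((Tk_cont hA₁ hZ₁ f g hf hg x).const_mul c).add
      ((Tk_cont hA₂ hZ₂ f g hf hg x).const_mul (1 - c))
  have hmid : ∀ s t s' t', P s t → P s' t' → P ((s + s') / 2) ((t + t') / 2) := by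
    intro s t s' t' h h'
    have hN : ((c : ℂ) • Tk A₁ Z₁ ((s + s') / 2) ((t + t') / 2) +
        ((1 : ℂ) - (c : ℂ)) • Tk A₂ Z₂ ((s + s') / 2) ((t + t') / 2)).IsHermitian := by
      unfold Matrix.IsHermitian
      rw [conjTranspose_add, conjTranspose_smul, conjTranspose_smul, (Tk_herm hA₁ hZ₁ _ _).eq,
        (Tk_herm hA₂ hZ₂ _ _).eq]
      simp
    have key := geo (Ti := Tk A Z (-(s' / 2)) (-(t' / 2))) hN
      (Tk_herm hA hZ (s / 2) (t / 2)) (Tk_herm hA hZ (s' / 2) (t' / 2))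
      (Tk_herm hA hZ ((s + s') / 4) ((t + t') / 4)) (Tk_herm hA hZ (-((s + s') / 4)) (-((t + t') / 4)))
      (Tk_herm hA hZ (-(s / 2)) (-(t / 2)))
      (by rw [Tk_mul hA hZ, add_neg_cancel, add_neg_cancel, Tk_zero hA hZ])
      (by rw [Tk_mul hA hZ, neg_add_cancel, neg_add_cancel, Tk_zero hA hZ])
      (by rw [Tk_mul hA hZ, add_neg_cancel, add_neg_cancel, Tk_zero hA hZ])
      (by rw [Tk_mul hA hZ, neg_add_cancel, neg_add_cancel, Tk_zero hA hZ])
      (by rw [Tk_mul hA hZ, neg_add_cancel, neg_add_cancel, Tk_zero hA hZ])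
      (by rw [Tk_mul hA hZ, Tk_mul hA hZ]; congr 1 <;> ring)
      (by
        intro x y
        rw [Tk_mul hA hZ, Tk_mul hA hZ, add_halves, add_halves, add_halves, add_halves, qf_add]
        have h1 := mul_le_mul_of_nonneg_left (Tk_piece hA₁ hZ₁ s t s' t' x y) hc0
        have h2 := mul_le_mul_of_nonneg_left (Tk_piece hA₂ hZ₂ s t s' t' x y)
          (by linarith : 0 ≤ 1 - c)
        have h3 := h x
        have h4 := h' y
        linarith)
    intro x
    have := key x
    rw [qf_add, Tk_mul hA hZ, ← add_div, ← add_div] at this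
    exact this
  have h00 : P 0 0 := by
    intro x
    rw [Tk_zero hA₁ hZ₁, Tk_zero hA₂ hZ₂, Tk_zero hA hZ]
    linarith
  have h10 : P 1 0 := by
    intro x
    rw [← qf_add]
    apply le_of_eq
    congr 1
    unfold Tk
    rw [mpow_zero hZ₁.1, mpow_zero hZ₂.1, mpow_zero hZ.1, mpow_one hA₁.1, mpow_one hA₂.1,
      mpow_one hA.1, hAe, kronecker_add, kronecker_smul, kronecker_smul]
  have h01 : P 0 1 := by
    intro x
    rw [← qf_add]
    apply le_of_eq
    congr 1
    unfold Tk
    rw [mpow_zero hA₁.1, mpow_zero hA₂.1, mpow_zero hA.1, mpow_one hZ₁.1, mpow_one hZ₂.1,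
      mpow_one hZ.1, hZe, transpose_add, transpose_smul, transpose_smul, add_kronecker,
      smul_kronecker, smul_kronecker]
  have hline : ∀ θ : ℝ, 0 ≤ θ → θ ≤ 1 → P θ (1 - θ) := by
    intro θ h0 h1
    refine seg {θ | P θ (1 - θ)} (hcl _ _ continuous_id (by fun_prop)) (by simpa using h01)
      (by simpa using h10) ?_ h0 h1
    intro a ha b hb
    have := hmid _ _ _ _ ha hb
    show P _ _
    convert this using 1
    ring
  suffices P s t from this x
  rcases (add_nonneg hs ht).eq_or_lt with h | h
  · have : s = 0 := by linarith
    have : t = 0 := by linarith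
    subst s t
    exact h00
  · have hl := hline (s / (s + t)) (by positivity) (by rw [div_le_one h]; linarith)
    have := seg {θ | P (θ * (s / (s + t))) (θ * (1 - s / (s + t)))}
      (hcl _ _ (by fun_prop) (by fun_prop)) (by simpa using h00) (by simpa using hl) ?_ h.le hst
    · have e : P _ _ := this
      have e1 : (s + t) * (s / (s + t)) = s := by field_simp
      have e2 : (s + t) * (1 - s / (s + t)) = t := by field_simp; ring
      rwa [e1, e2] at e
    · intro a ha b hb
      have := hmid _ _ _ _ ha hb
      show P _ _
      convert this using 1 <;> ring

lemma lieb_convex {n : ℕ} {A₁ A₂ Z₁ Z₂ A Z : Matrix (Fin n) (Fin n) ℂ} (hA₁ : A₁.PosDef)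
    (hA₂ : A₂.PosDef) (hZ₁ : Z₁.PosDef) (hZ₂ : Z₂.PosDef) (hA : A.PosDef) (hZ : Z.PosDef)
    (c : ℝ) (hc0 : 0 ≤ c) (hc1 : c ≤ 1)
    (hAe : A = (c : ℂ) • A₁ + ((1 : ℂ) - (c : ℂ)) • A₂)
    (hZe : Z = (c : ℂ) • Z₁ + ((1 : ℂ) - (c : ℂ)) • Z₂)
    (s t : ℝ) (hs : 0 ≤ s) (ht : 0 ≤ t) (hst : s + t ≤ 1) (x y : Fin n × Fin n → ℂ) :
    qf_s18 (Tk A Z (-s) (-t)) ((c : ℂ) • x + ((1 : ℂ) - (c : ℂ)) • y)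
        ((c : ℂ) • x + ((1 : ℂ) - (c : ℂ)) • y) ≤
      c * qf_s18 (Tk A₁ Z₁ (-s) (-t)) x x + (1 - c) * qf_s18 (Tk A₂ Z₂ (-s) (-t)) y y := by
  set v := (c : ℂ) • x + ((1 : ℂ) - (c : ℂ)) • y with hv
  set w := Tk A Z (-s) (-t) *ᵥ v with hw
  have hL := lieb_s18 hA₁ hA₂ hZ₁ hZ₂ hA hZ c hc0 hc1 hAe hZe s t hs ht hst w
  have h1 := Tk_piece hA₁ hZ₁ (-s) (-t) s t x w
  have h2 := Tk_piece hA₂ hZ₂ (-s) (-t) s t y w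
  simp only [neg_add_cancel, zero_div] at h1 h2
  rw [Tk_zero hA₁ hZ₁] at h1
  rw [Tk_zero hA₂ hZ₂] at h2
  have e1 : qf_s18 (Tk A Z s t) w w = qf_s18 (Tk A Z (-s) (-t)) v v := by
    unfold qf_s18
    rw [hw, mulVec_mulVec, Tk_mul hA hZ, add_neg_cancel, add_neg_cancel, Tk_zero hA hZ,
      one_mulVec, dot_herm (Tk_herm hA hZ _ _)]
  have e2 : qf_s18 (Tk A Z (-s) (-t)) v v = c * qf_s18 1 x w + (1 - c) * qf_s18 1 y w := by
    unfold qf_s18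
    rw [← hw, hv, star_add, star_smul, star_smul, add_dotProduct, smul_dotProduct,
      smul_dotProduct, one_mulVec]
    simp
  have h1' := mul_le_mul_of_nonneg_left h1 hc0
  have h2' := mul_le_mul_of_nonneg_left h2 (by linarith : 0 ≤ 1 - c)
  linarith

lemma comb_posDef {n : ℕ} {A₁ A₂ : Matrix (Fin n) (Fin n) ℂ} (hA₁ : A₁.PosDef)
    (hA₂ : A₂.PosDef) (c : ℝ) (hc0 : 0 ≤ c) (hc1 : c ≤ 1) :
    ((c : ℂ) • A₁ + ((1 : ℂ) - (c : ℂ)) • A₂).PosDef := by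
  have e : ((1 : ℂ) - (c : ℂ)) = ((1 - c : ℝ) : ℂ) := by push_cast; rfl
  rcases hc0.eq_or_lt with rfl | h
  · simpa using hA₂
  · refine (hA₁.smul (by exact_mod_cast h : (0 : ℂ) < c)).add_posSemidef
      (hA₂.posSemidef.smul ?_)
    rw [e]
    exact_mod_cast (by linarith : 0 ≤ 1 - c)

lemma Y_psd {n : ℕ} {A : Matrix (Fin n) (Fin n) ℂ} (hA : A.PosDef) (B : Matrix (Fin n) (Fin n) ℂ)
    (s : ℝ) : (Bᴴ * mpow A s * B).PosSemidef := by
  refine PosSemidef.conjTranspose_mul_mul_same ?_ B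
  have := posSemidef_conjTranspose_mul_self (mpow A (s / 2))
  rwa [(mpow_herm hA.1 _).eq, mpow_add hA, add_halves] at this

theorem stmt18 {n : ℕ} (s q : ℝ) (hs0 : 0 ≤ s) (hs1 : s < 1)
    (hq0 : 1 / (2 - s) ≤ q) (hq1 : q < 1)
    (A₁ A₂ : Matrix (Fin n) (Fin n) ℂ) (hA₁ : A₁.PosDef) (hA₂ : A₂.PosDef)
    (B₁ B₂ : Matrix (Fin n) (Fin n) ℂ)
    (c : ℝ) (hc0 : 0 ≤ c) (hc1 : c ≤ 1) :
    (mpow (((c : ℂ) • B₁ + ((1 : ℂ) - (c : ℂ)) • B₂)ᴴ *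
          mpow ((c : ℂ) • A₁ + ((1 : ℂ) - (c : ℂ)) • A₂) (-s) *
          ((c : ℂ) • B₁ + ((1 : ℂ) - (c : ℂ)) • B₂)) q).trace.re ≤
      c * (mpow (B₁ᴴ * mpow A₁ (-s) * B₁) q).trace.re +
        (1 - c) * (mpow (B₂ᴴ * mpow A₂ (-s) * B₂) q).trace.re := by
  have hs2 : 0 < 2 - s := by linarith
  have hq : 0 < q := lt_of_lt_of_le (by positivity) hq0
  have hqinv : 1 / q ≤ 2 - s := by
    rw [div_le_iff₀ hs2] at hq0
    rw [div_le_iff₀ hq]; linarith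
  have hqinv1 : 1 ≤ 1 / q := by rw [le_div_iff₀ hq]; linarith
  have hA := comb_posDef hA₁ hA₂ c hc0 hc1
  refine le_of_forall_pos_le_add fun ε hε => ?_
  obtain ⟨δ, hδ, hδε⟩ : ∃ δ : ℝ, 0 < δ ∧ n * δ ≤ ε := by
    refine ⟨ε / (n + 1), by positivity, ?_⟩
    rw [mul_div_assoc', div_le_iff₀ (by positivity)]
    nlinarith
  obtain ⟨Z₁, hZ₁, h₁⟩ := exists_Z (Y_psd hA₁ B₁ (-s)) q hq hq1 δ hδ
  obtain ⟨Z₂, hZ₂, h₂⟩ := exists_Z (Y_psd hA₂ B₂ (-s)) q hq hq1 δ hδ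
  have hZ := comb_posDef hZ₁ hZ₂ c hc0 hc1
  have hY := young_trace_s18 (Y_psd hA ((c : ℂ) • B₁ + ((1 : ℂ) - (c : ℂ)) • B₂) (-s)) hZ q hq hq1
  have hL := lieb_convex hA₁ hA₂ hZ₁ hZ₂ hA hZ c hc0 hc1 rfl rfl s (1 / q - 1) hs0
    (by linarith) (by linarith) (vec B₁) (vec B₂)
  rw [← vec_smul, ← vec_smul, ← vec_add, qf_vec, qf_vec, qf_vec] at hL
  have hT : ((c : ℂ) • Z₁ + ((1 : ℂ) - (c : ℂ)) • Z₂).trace.re =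
      c * Z₁.trace.re + (1 - c) * Z₂.trace.re := by
    rw [trace_add, trace_smul, trace_smul, ← Complex.ofReal_one, ← Complex.ofReal_sub,
      smul_eq_mul, smul_eq_mul, Complex.add_re, Complex.re_ofReal_mul, Complex.re_ofReal_mul]
  rw [hT] at hY
  have hL' := mul_le_mul_of_nonneg_left hL hq.le
  have h₁' := mul_le_mul_of_nonneg_left h₁ hc0
  have h₂' := mul_le_mul_of_nonneg_left h₂ (by linarith : 0 ≤ 1 - c)
  linarith
end
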